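/- arXiv:2008.01155 — 8 statements merged into one kernel-verified Lean document; each statement's English description precedes it below -/
import Mathlib

section
/- (Pathwise version of Proposition A.3, forward direction.) Let B : [0,∞) → ℝ be continuous with B(0) = 0 and suppose the zero set {t ≥ 0 : B(t) = 0} has Lebesgue measure zero. Then Θ := σ₊⁻² P₊^B + σ₋⁻² P₋^B is continuous, strictly increasing, satisfies Θ(0) = 0 and Θ(t) → ∞ as t → ∞, hence has a continuous inverse Θ⁻¹ : [0,∞) → [0,∞); moreover the two-speed Brownian path Z := B ∘ Θ⁻¹ satisfies Z = B ∘ (σ₊² P₊^Z + σ₋² P₋^Z) and P₊^Z(θ) + P₋^Z(θ) = θ for every θ ≥ 0. -/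
open MeasureTheory Set Filter

/-- Occupation time of the positive half-line: `P₊^f(t) = ∫₀^t 1{f(s) > 0} ds`. -/
noncomputable def occPos (f : ℝ → ℝ) (t : ℝ) : ℝ :=
  ∫ s in (0:ℝ)..t, Set.indicator {u : ℝ | 0 < f u} (fun _ => (1:ℝ)) s

/-- Occupation time of the negative half-line: `P₋^f(t) = ∫₀^t 1{f(s) < 0} ds`. -/
noncomputable def occNeg (f : ℝ → ℝ) (t : ℝ) : ℝ :=
  ∫ s in (0:ℝ)..t, Set.indicator {u : ℝ | f u < 0} (fun _ => (1:ℝ)) s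


theorem aux_ii (h : ℝ → ℝ) (hm : Measurable h) (M : ℝ) (hM : ∀ x, |h x| ≤ M) (u v : ℝ) :
    IntervalIntegrable h volume u v := by
  refine (intervalIntegrable_const (c := M)).mono_fun hm.aestronglyMeasurable ?_
  refine Eventually.of_forall fun x => ?_
  show |h x| ≤ |M|
  exact (hM x).trans (le_abs_self M)

theorem aux_ind (S : Set ℝ) (t : ℝ) (ht : 0 ≤ t) (U : Set ℝ) (hU : MeasurableSet U)
    (h : ∀ s ∈ Ioc 0 t, (s ∈ S ↔ s ∈ U)) :
    (∫ s in (0:ℝ)..t, S.indicator (fun _ => (1:ℝ)) s) = volume.real (U ∩ Ioc 0 t) := by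
  rw [intervalIntegral.integral_of_le ht]
  have : ∫ s in Ioc 0 t, S.indicator (fun _ => (1:ℝ)) s =
      ∫ s in Ioc 0 t, U.indicator (fun _ => (1:ℝ)) s := by
    refine setIntegral_congr_fun measurableSet_Ioc fun s hs => ?_
    by_cases hsU : s ∈ U
    · simp [hsU, (h s hs).2 hsU]
    · have : s ∉ S := fun hS => hsU ((h s hs).1 hS)
      simp [hsU, this]
  rw [this, integral_indicator hU, Measure.restrict_restrict hU]
  simp

/-- The weight equal to `x` on `P`, `y` on `N` and `z` elsewhere. -/
noncomputable def auxW (P N : Set ℝ) (x y z : ℝ) : ℝ → ℝ := by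
  classical exact P.piecewise (fun _ => x) (N.piecewise (fun _ => y) (fun _ => z))

theorem auxW_meas (P N : Set ℝ) (hP : MeasurableSet P) (hN : MeasurableSet N) (x y z : ℝ) :
    Measurable (auxW P N x y z) := by
  classical
  unfold auxW
  exact measurable_const.piecewise hP (measurable_const.piecewise hN measurable_const)

theorem auxW_P {P N : Set ℝ} {x y z s : ℝ} (h : s ∈ P) : auxW P N x y z s = x := by
  classical
  simp [auxW, h]

theorem auxW_N {P N : Set ℝ} {x y z s : ℝ} (h' : s ∉ P) (h : s ∈ N) : auxW P N x y z s = y := by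
  classical
  simp [auxW, h, h']

theorem auxW_O {P N : Set ℝ} {x y z s : ℝ} (h' : s ∉ P) (h : s ∉ N) : auxW P N x y z s = z := by
  classical
  simp [auxW, h, h']

theorem auxW_all {P N : Set ℝ} {x y z : ℝ} (p : ℝ → Prop) (hx : p x) (hy : p y) (hz : p z)
    (s : ℝ) : p (auxW P N x y z s) := by
  by_cases h : s ∈ P
  · rwa [auxW_P h]
  · by_cases h' : s ∈ N
    · rwa [auxW_N h h']
    · rwa [auxW_O h h']

theorem auxW_ii (P N : Set ℝ) (hP : MeasurableSet P) (hN : MeasurableSet N) (x y z u v : ℝ) :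
    IntervalIntegrable (auxW P N x y z) volume u v := by
  refine aux_ii _ (auxW_meas P N hP hN x y z) (|x| + |y| + |z|) (fun s => ?_) u v
  have := abs_nonneg x
  have := abs_nonneg y
  have := abs_nonneg z
  exact auxW_all (fun r => |r| ≤ |x| + |y| + |z|) (by linarith) (by linarith) (by linarith) s

theorem aux_image (Φ : ℝ → ℝ) (hΦ : StrictMono Φ) (k : ℝ) (hk : 0 ≤ k) (S : Set ℝ)
    (hS : MeasurableSet S) (hd : ∀ s ∈ S, HasDerivAt Φ k s) :
    volume.real (Φ '' S) = k * volume.real S := by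
  have h := lintegral_deriv_eq_volume_image_of_monotoneOn (f := Φ) (f' := fun _ => k) hS
    (fun x hx => (hd x hx).hasDerivWithinAt) (hΦ.monotone.monotoneOn S)
  rw [Measure.real, ← h]
  simp [Measure.real, ENNReal.toReal_mul, ENNReal.toReal_ofReal hk]

/-- Pathwise version of Proposition A.3, forward direction: from a continuous path `B`
vanishing at `0` whose zero set is Lebesgue-null, the time change
`Θ = σ₊⁻² P₊^B + σ₋⁻² P₋^B` is continuous, strictly increasing, vanishes at `0` and tends
to `∞`; it has a continuous inverse `Tinv` on `[0,∞)`, and the two-speed path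
`Z = B ∘ Tinv` satisfies `Z = B ∘ (σ₊² P₊^Z + σ₋² P₋^Z)` and `P₊^Z(θ) + P₋^Z(θ) = θ`. -/
theorem two_speed_brownian_path_forward
    (σp σm : ℝ) (hσp : 0 < σp) (hσm : 0 < σm)
    (B : ℝ → ℝ) (hB : ContinuousOn B (Set.Ici 0)) (hB0 : B 0 = 0)
    (hzero : MeasureTheory.volume {t : ℝ | 0 ≤ t ∧ B t = 0} = 0) :
    ∃ Θ Tinv : ℝ → ℝ,
      (∀ t : ℝ, Θ t = (σp ^ 2)⁻¹ * occPos B t + (σm ^ 2)⁻¹ * occNeg B t) ∧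
      ContinuousOn Θ (Set.Ici 0) ∧
      StrictMonoOn Θ (Set.Ici 0) ∧
      Θ 0 = 0 ∧
      Filter.Tendsto Θ Filter.atTop Filter.atTop ∧
      ContinuousOn Tinv (Set.Ici 0) ∧
      Set.MapsTo Tinv (Set.Ici 0) (Set.Ici 0) ∧
      (∀ t ∈ Set.Ici (0:ℝ), Tinv (Θ t) = t) ∧
      (∀ θ ∈ Set.Ici (0:ℝ), Θ (Tinv θ) = θ) ∧
      (∀ θ ∈ Set.Ici (0:ℝ),
        (B ∘ Tinv) θ =
          B (σp ^ 2 * occPos (B ∘ Tinv) θ + σm ^ 2 * occNeg (B ∘ Tinv) θ) ∧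
        occPos (B ∘ Tinv) θ + occNeg (B ∘ Tinv) θ = θ) := by
  set a : ℝ := (σp ^ 2)⁻¹ with ha
  set b : ℝ := (σm ^ 2)⁻¹ with hb
  have hap : 0 < a := by positivity
  have hbp : 0 < b := by positivity
  have haσ : σp ^ 2 * a = 1 := mul_inv_cancel₀ (by positivity)
  have hbσ : σm ^ 2 * b = 1 := mul_inv_cancel₀ (by positivity)
  set c : ℝ := min a b with hc
  have hcp : 0 < c := lt_min hap hbp
  set P : Set ℝ := Ioi 0 ∩ B ⁻¹' (Ioi 0) with hP
  set N : Set ℝ := Ioi 0 ∩ B ⁻¹' (Iio 0) with hN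
  have hB' : ContinuousOn B (Ioi 0) := hB.mono Ioi_subset_Ici_self
  have hPo : IsOpen P := hB'.isOpen_inter_preimage isOpen_Ioi isOpen_Ioi
  have hNo : IsOpen N := hB'.isOpen_inter_preimage isOpen_Ioi isOpen_Iio
  have hPN : ∀ s ∈ N, s ∉ P := fun s hs hs' => lt_asymm (show B s < 0 from hs.2) (show 0 < B s from hs'.2)
  have hii := auxW_ii P N hPo.measurableSet hNo.measurableSet
  -- occupation times of `B` as measures
  have hoP : ∀ t, 0 ≤ t → occPos B t = volume.real (P ∩ Ioc 0 t) := fun t ht =>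
    aux_ind _ t ht P hPo.measurableSet fun s hs => ⟨fun h => ⟨hs.1, h⟩, fun h => h.2⟩
  have hoN : ∀ t, 0 ≤ t → occNeg B t = volume.real (N ∩ Ioc 0 t) := fun t ht =>
    aux_ind _ t ht N hNo.measurableSet fun s hs => ⟨fun h => ⟨hs.1, h⟩, fun h => h.2⟩
  have hlin : ∀ x y z t : ℝ, 0 ≤ t →
      (∫ s in (0:ℝ)..t, auxW P N x y z s) = x * occPos B t + y * occNeg B t := by
    intro x y z t ht
    have h1 : occPos B t = ∫ s in (0:ℝ)..t, auxW P N 1 0 0 s := by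
      unfold occPos
      refine intervalIntegral.integral_congr_ae (Eventually.of_forall fun s hs => ?_)
      rw [uIoc_of_le ht] at hs
      by_cases h : 0 < B s
      · rw [auxW_P (show s ∈ P from ⟨hs.1, h⟩)]
        simp [h]
      · have h' : s ∉ P := fun h' => h h'.2
        have : auxW P N 1 0 0 s = 0 := by
          by_cases h2 : s ∈ N
          · rw [auxW_N h' h2]
          · rw [auxW_O h' h2]
        rw [this]
        simp [h]
    have h2 : occNeg B t = ∫ s in (0:ℝ)..t, auxW P N 0 1 0 s := by
      unfold occNeg
      refine intervalIntegral.integral_congr_ae (Eventually.of_forall fun s hs => ?_)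
      rw [uIoc_of_le ht] at hs
      by_cases h : B s < 0
      · have hsN : s ∈ N := ⟨hs.1, h⟩
        rw [auxW_N (hPN s hsN) hsN]
        simp [h]
      · have h' : s ∉ N := fun h' => h h'.2
        have : auxW P N 0 1 0 s = 0 := by
          by_cases h2 : s ∈ P
          · rw [auxW_P h2]
          · rw [auxW_O h2 h']
        rw [this]
        simp [h]
    rw [h1, h2, ← intervalIntegral.integral_const_mul, ← intervalIntegral.integral_const_mul,
      ← intervalIntegral.integral_add ((hii _ _ _ _ _).const_mul _) ((hii _ _ _ _ _).const_mul _)]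
    refine intervalIntegral.integral_congr_ae ?_
    have hz : ∀ᵐ s ∂(volume : Measure ℝ), ¬ (0 ≤ s ∧ B s = 0) := by
      rw [ae_iff]
      simpa using hzero
    filter_upwards [hz] with s hs0 hs
    rw [uIoc_of_le ht] at hs
    rcases lt_trichotomy (B s) 0 with h | h | h
    · have hsN : s ∈ N := ⟨hs.1, h⟩
      rw [auxW_N (hPN s hsN) hsN, auxW_N (hPN s hsN) hsN, auxW_N (hPN s hsN) hsN]
      ring
    · exact absurd ⟨hs.1.le, h⟩ hs0
    · have hsP : s ∈ P := ⟨hs.1, h⟩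
      rw [auxW_P hsP, auxW_P hsP, auxW_P hsP]
      ring
  have htot : ∀ t, 0 ≤ t → occPos B t + occNeg B t = t := by
    intro t ht
    have h := hlin 1 1 1 t ht
    have h1 : auxW P N 1 1 1 = fun _ => (1:ℝ) :=
      funext fun s => auxW_all (fun r => r = 1) rfl rfl rfl s
    rw [h1] at h
    simp at h
    linarith
  -- the extended time change
  let g : ℝ → ℝ := auxW P N a b c
  let Φ : ℝ → ℝ := fun t => ∫ s in (0:ℝ)..t, g s
  have hΦ0 : Φ 0 = 0 := intervalIntegral.integral_same
  have hΦc : Continuous Φ := intervalIntegral.continuous_primitive (fun u v => hii a b c u v) 0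
  have hgc : ∀ s, c ≤ g s := auxW_all (fun r => c ≤ r) (min_le_left _ _) (min_le_right _ _) le_rfl
  have hΦd : ∀ u v, u ≤ v → c * (v - u) ≤ Φ v - Φ u := by
    intro u v huv
    have h : Φ v - Φ u = ∫ s in u..v, g s :=
      intervalIntegral.integral_interval_sub_left (hii a b c 0 v) (hii a b c 0 u)
    rw [h]
    have := intervalIntegral.integral_mono_on huv (intervalIntegrable_const (c := c))
      (hii a b c u v) (fun s _ => hgc s)
    simp only [intervalIntegral.integral_const, smul_eq_mul] at this
    linarith
  have hΦm : StrictMono Φ := by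
    intro u v huv
    have := hΦd u v huv.le
    have : 0 < c * (v - u) := mul_pos hcp (sub_pos.2 huv)
    linarith
  have hΦt : Tendsto Φ atTop atTop := by
    refine tendsto_atTop_mono' atTop ?_ (tendsto_id.const_mul_atTop hcp)
    filter_upwards [eventually_ge_atTop (0:ℝ)] with t ht
    have := hΦd 0 t ht
    simp only [id]
    linarith
  have hΦb : Tendsto Φ atBot atBot := by
    refine tendsto_atBot_mono' atBot ?_ (tendsto_id.const_mul_atBot hcp)
    filter_upwards [eventually_le_atBot (0:ℝ)] with t ht
    have := hΦd t 0 ht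
    simp only [id]
    linarith
  let e : ℝ ≃o ℝ := hΦm.orderIsoOfSurjective Φ (hΦc.surjective hΦt hΦb)
  have he : ∀ t, e t = Φ t := fun t => rfl
  have heS : ∀ t, e.symm (Φ t) = t := fun t => e.symm_apply_apply t
  have hSe : ∀ t, Φ (e.symm t) = t := fun t => e.apply_symm_apply t
  have hT0 : e.symm 0 = 0 := by rw [← hΦ0, heS, hΦ0]
  have hTpos : ∀ θ, 0 ≤ θ → 0 ≤ e.symm θ := fun θ h => by
    rw [← hT0]
    exact e.symm.monotone h
  have hdP : ∀ s ∈ P, HasDerivAt Φ a s := by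
    intro s hs
    have hev : g =ᶠ[nhds s] fun _ => a := by
      filter_upwards [hPo.mem_nhds hs] with r hr using auxW_P hr
    have := intervalIntegral.integral_hasDerivAt_right (hii a b c 0 s)
      ((auxW_meas P N hPo.measurableSet hNo.measurableSet a b c).stronglyMeasurable.stronglyMeasurableAtFilter)
      (continuousAt_const.congr hev.symm)
    rwa [auxW_P hs] at this
  have hdN : ∀ s ∈ N, HasDerivAt Φ b s := by
    intro s hs
    have hev : g =ᶠ[nhds s] fun _ => b := by
      filter_upwards [hNo.mem_nhds hs] with r hr using auxW_N (hPN r hr) hr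
    have := intervalIntegral.integral_hasDerivAt_right (hii a b c 0 s)
      ((auxW_meas P N hPo.measurableSet hNo.measurableSet a b c).stronglyMeasurable.stronglyMeasurableAtFilter)
      (continuousAt_const.congr hev.symm)
    rwa [auxW_N (hPN s hs) hs] at this
  have himg : ∀ (U : Set ℝ) (t : ℝ), Φ '' (U ∩ Ioc 0 t) = (e.symm ⁻¹' U) ∩ Ioc 0 (Φ t) := by
    intro U t
    ext u
    constructor
    · rintro ⟨s, ⟨hsU, hs0, hst⟩, rfl⟩
      refine ⟨?_, ?_, hΦm.monotone hst⟩
      · rw [mem_preimage, heS]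
        exact hsU
      · rw [← hΦ0]
        exact hΦm hs0
    · rintro ⟨huU, hu0, hut⟩
      refine ⟨e.symm u, ⟨huU, ?_, ?_⟩, hSe u⟩
      · rw [← hT0]
        exact e.symm.strictMono hu0
      · rw [← heS t]
        exact e.symm.monotone hut
  have hTc : Continuous e.symm := e.symm.continuous
  have hTm : Measurable e.symm := hTc.measurable
  have hZP : ∀ t, 0 ≤ t → occPos (B ∘ e.symm) (Φ t) = a * occPos B t := by
    intro t ht
    have hΦt0 : 0 ≤ Φ t := by
      rw [← hΦ0]
      exact hΦm.monotone ht
    rw [hoP t ht, ← aux_image Φ hΦm a hap.le _ (hPo.measurableSet.inter measurableSet_Ioc)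
      (fun s hs => hdP s hs.1), himg]
    refine aux_ind _ _ hΦt0 _ (hTm hPo.measurableSet) fun s hs => ?_
    have : 0 < e.symm s := by
      rw [← hT0]
      exact e.symm.strictMono hs.1
    exact ⟨fun h => ⟨this, h⟩, fun h => h.2⟩
  have hZN : ∀ t, 0 ≤ t → occNeg (B ∘ e.symm) (Φ t) = b * occNeg B t := by
    intro t ht
    have hΦt0 : 0 ≤ Φ t := by
      rw [← hΦ0]
      exact hΦm.monotone ht
    rw [hoN t ht, ← aux_image Φ hΦm b hbp.le _ (hNo.measurableSet.inter measurableSet_Ioc)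
      (fun s hs => hdN s hs.1), himg]
    refine aux_ind _ _ hΦt0 _ (hTm hNo.measurableSet) fun s hs => ?_
    have : 0 < e.symm s := by
      rw [← hT0]
      exact e.symm.strictMono hs.1
    exact ⟨fun h => ⟨this, h⟩, fun h => h.2⟩
  have hΘ : ∀ t ∈ Ici (0:ℝ), a * occPos B t + b * occNeg B t = Φ t :=
    fun t ht => (hlin a b c t ht).symm
  refine ⟨fun t => a * occPos B t + b * occNeg B t, e.symm, fun t => rfl,
    hΦc.continuousOn.congr hΘ, ?_, (hΘ 0 self_mem_Ici).trans hΦ0, ?_, hTc.continuousOn,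
    fun θ h => hTpos θ h, ?_, ?_, ?_⟩
  · intro u hu v hv huv
    simp only [hΘ u hu, hΘ v hv]
    exact hΦm huv
  · refine hΦt.congr' ?_
    filter_upwards [eventually_ge_atTop (0:ℝ)] with t ht using (hΘ t ht).symm
  · intro t ht
    simp only [hΘ t ht]
    exact heS t
  · intro θ hθ
    simp only [hΘ _ (hTpos θ hθ)]
    exact hSe θ
  · intro θ hθ
    have ht := hTpos θ hθ
    have h1 := hZP _ ht
    have h2 := hZN _ ht
    rw [hSe] at h1 h2
    rw [h1, h2]
    constructor
    · rw [← mul_assoc, ← mul_assoc, haσ, hbσ, one_mul, one_mul, htot _ ht]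
      rfl
    · rw [hΘ _ ht, hSe]
end

section
/- (Pathwise version of Proposition A.3, converse direction.) Let B : [0,∞) → ℝ be continuous with B(0) = 0, and let Z : [0,∞) → ℝ be a continuous function satisfying Z = B ∘ (σ₊² P₊^Z + σ₋² P₋^Z) and P₊^Z(θ) + P₋^Z(θ) = θ for every θ ≥ 0. Then Θ := σ₊⁻² P₊^B + σ₋⁻² P₋^B is continuous and strictly increasing with a continuous inverse Θ⁻¹ defined on [0,∞), and Z = B ∘ Θ⁻¹, i.e. Z is a two-speed Brownian path built from B. -/
open MeasureTheory Set Filter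

lemma occPos_eq_set (f : ℝ → ℝ) (hf : Continuous f) {t : ℝ} (ht : 0 ≤ t) :
    occPos f t = ∫ _ in (Ioc 0 t ∩ {u : ℝ | 0 < f u}), (1:ℝ) := by
  unfold occPos
  rw [intervalIntegral.integral_of_le ht, setIntegral_indicator]
  exact (isOpen_lt continuous_const hf).measurableSet

lemma occNeg_eq (f : ℝ → ℝ) : occNeg f = occPos (fun x => - f x) := by
  funext t
  simp [occNeg, occPos]

lemma occPos_congr (f : ℝ → ℝ) {t : ℝ} (ht : 0 ≤ t) :
    occPos (fun x => f (max x 0)) t = occPos f t := by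
  unfold occPos
  apply intervalIntegral.integral_congr
  intro x hx
  rw [uIcc_of_le ht] at hx
  simp [indicator, max_eq_left hx.1]

lemma occNeg_congr (f : ℝ → ℝ) {t : ℝ} (ht : 0 ≤ t) :
    occNeg (fun x => f (max x 0)) t = occNeg f t := by
  rw [occNeg_eq, occNeg_eq]
  exact occPos_congr (fun x => - f x) ht

lemma occ_meas (f : ℝ → ℝ) (hf : Continuous f) :
    Measurable (indicator {u : ℝ | 0 < f u} (fun _ => (1:ℝ))) :=
  measurable_const.indicator (isOpen_lt continuous_const hf).measurableSet

lemma occ_int (f : ℝ → ℝ) (hf : Continuous f) (a b : ℝ) :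
    IntervalIntegrable (indicator {u : ℝ | 0 < f u} (fun _ => (1:ℝ))) volume a b := by
  have h : IntervalIntegrable (fun _ : ℝ => (1:ℝ)) volume a b := intervalIntegrable_const
  refine h.mono_fun (occ_meas f hf).aestronglyMeasurable ?_
  filter_upwards with x
  by_cases hx : 0 < f x <;> simp [indicator, hx]

lemma occPos_mono (f : ℝ → ℝ) (hf : Continuous f) {s t : ℝ} (hst : s ≤ t) :
    occPos f s ≤ occPos f t := by
  have h := intervalIntegral.integral_add_adjacent_intervals (occ_int f hf 0 s) (occ_int f hf s t)
  have h2 : 0 ≤ ∫ x in s..t, indicator {u : ℝ | 0 < f u} (fun _ => (1:ℝ)) x :=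
    intervalIntegral.integral_nonneg hst
      (fun x _ => indicator_nonneg (fun _ _ => zero_le_one) x)
  unfold occPos
  linarith

lemma occPos_cont (f : ℝ → ℝ) (hf : Continuous f) : Continuous (occPos f) :=
  intervalIntegral.continuous_primitive (fun a b => occ_int f hf a b) 0

lemma occPos_deriv_pos (f : ℝ → ℝ) (hf : Continuous f) {s : ℝ} (hs : 0 < f s) :
    HasDerivAt (occPos f) 1 s := by
  have he : (indicator {u : ℝ | 0 < f u} (fun _ => (1:ℝ)) : ℝ → ℝ) =ᶠ[nhds s] fun _ => (1:ℝ) := by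
    filter_upwards [(isOpen_lt continuous_const hf).mem_nhds hs] with x hx
    exact indicator_of_mem hx (fun _ => (1:ℝ))
  have h := intervalIntegral.integral_hasDerivAt_right (occ_int f hf 0 s)
    (occ_meas f hf).stronglyMeasurable.stronglyMeasurableAtFilter
    (continuousAt_const.congr he.symm)
  rw [he.eq_of_nhds] at h
  exact h

lemma occPos_deriv_neg (f : ℝ → ℝ) (hf : Continuous f) {s : ℝ} (hs : f s < 0) :
    HasDerivAt (occPos f) 0 s := by
  have he : (indicator {u : ℝ | 0 < f u} (fun _ => (1:ℝ)) : ℝ → ℝ) =ᶠ[nhds s] fun _ => (0:ℝ) := by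
    filter_upwards [(isOpen_lt hf continuous_const).mem_nhds hs] with x hx
    exact indicator_of_notMem (fun h => lt_asymm hx h) (fun _ => (1:ℝ))
  have h := intervalIntegral.integral_hasDerivAt_right (occ_int f hf 0 s)
    (occ_meas f hf).stronglyMeasurable.stronglyMeasurableAtFilter
    (continuousAt_const.congr he.symm)
  rw [he.eq_of_nhds] at h
  exact h

lemma occPos_image (A B Z : ℝ → ℝ) (k θ : ℝ) (hk : 0 ≤ k) (hθ : 0 ≤ θ)
    (hB : Continuous B) (hZ : Continuous Z)
    (hA : StrictMonoOn A (Ici 0)) (hAc : Continuous A) (hA0 : A 0 = 0)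
    (hrep : ∀ s, 0 ≤ s → Z s = B (A s))
    (hd : ∀ s, 0 < Z s → HasDerivAt A k s) :
    occPos B (A θ) = k * occPos Z θ := by
  have hAθ : 0 ≤ A θ := by
    rw [← hA0]; exact hA.monotoneOn self_mem_Ici hθ hθ
  have him : Ioc 0 (A θ) ∩ {u : ℝ | 0 < B u} = image A (Ioc 0 θ ∩ {u : ℝ | 0 < Z u}) := by
    ext u
    constructor
    · rintro ⟨⟨h0, h1⟩, h2⟩
      have hu : u ∈ Icc (A 0) (A θ) := by rw [hA0]; exact ⟨h0.le, h1⟩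
      obtain ⟨s, hs, rfl⟩ := intermediate_value_Icc hθ hAc.continuousOn hu
      refine ⟨s, ⟨⟨lt_of_le_of_ne hs.1 ?_, hs.2⟩, ?_⟩, rfl⟩
      · rintro rfl
        rw [hA0] at h0; exact lt_irrefl _ h0
      · change 0 < Z s
        rw [hrep s hs.1]; exact h2
    · rintro ⟨s, ⟨⟨h0, h1⟩, h2⟩, rfl⟩
      refine ⟨⟨?_, hA.monotoneOn h0.le hθ h1⟩, ?_⟩
      · have := hA self_mem_Ici (show s ∈ Ici (0:ℝ) from h0.le) h0
        rwa [hA0] at this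
      · change 0 < B (A s)
        rw [← hrep s h0.le]; exact h2
  rw [occPos_eq_set B hB hAθ, occPos_eq_set Z hZ hθ, him]
  have hm : MeasurableSet (Ioc 0 θ ∩ {u : ℝ | 0 < Z u}) :=
    measurableSet_Ioc.inter (isOpen_lt continuous_const hZ).measurableSet
  rw [integral_image_eq_integral_abs_deriv_smul (f' := fun _ => k) hm
    (fun x hx => (hd x hx.2).hasDerivWithinAt)
    (hA.injOn.mono (fun x hx => hx.1.1.le))]
  rw [← integral_const_mul]
  simp [abs_of_nonneg hk]

/-- Pathwise version of Proposition A.3, converse direction: if a continuous path `Z`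
satisfies `Z = B ∘ (σ₊² P₊^Z + σ₋² P₋^Z)` and `P₊^Z(θ) + P₋^Z(θ) = θ` for all `θ ≥ 0`,
then `Θ = σ₊⁻² P₊^B + σ₋⁻² P₋^B` is continuous and strictly increasing with a continuous
inverse `Tinv` on `[0,∞)`, and `Z = B ∘ Tinv`, i.e. `Z` is a two-speed Brownian path
built from `B`. -/
theorem two_speed_brownian_path_converse
    (σp σm : ℝ) (hσp : 0 < σp) (hσm : 0 < σm)
    (B : ℝ → ℝ) (hB : ContinuousOn B (Set.Ici 0)) (hB0 : B 0 = 0)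
    (Z : ℝ → ℝ) (hZ : ContinuousOn Z (Set.Ici 0))
    (hrep : ∀ θ ∈ Set.Ici (0:ℝ),
      Z θ = B (σp ^ 2 * occPos Z θ + σm ^ 2 * occNeg Z θ))
    (hocc : ∀ θ ∈ Set.Ici (0:ℝ), occPos Z θ + occNeg Z θ = θ) :
    ∃ Θ Tinv : ℝ → ℝ,
      (∀ t : ℝ, Θ t = (σp ^ 2)⁻¹ * occPos B t + (σm ^ 2)⁻¹ * occNeg B t) ∧
      ContinuousOn Θ (Set.Ici 0) ∧
      StrictMonoOn Θ (Set.Ici 0) ∧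
      ContinuousOn Tinv (Set.Ici 0) ∧
      Set.MapsTo Tinv (Set.Ici 0) (Set.Ici 0) ∧
      (∀ t ∈ Set.Ici (0:ℝ), Tinv (Θ t) = t) ∧
      (∀ θ ∈ Set.Ici (0:ℝ), Θ (Tinv θ) = θ) ∧
      (∀ θ ∈ Set.Ici (0:ℝ), Z θ = B (Tinv θ)) := by
  set B' : ℝ → ℝ := fun x => B (max x 0) with hB'
  set Z' : ℝ → ℝ := fun x => Z (max x 0) with hZ'
  have hmax : Continuous (fun x : ℝ => max x 0) := continuous_id.max continuous_const
  have cB : Continuous B' := hB.comp_continuous hmax (fun x => le_max_right x 0)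
  have cZ : Continuous Z' := hZ.comp_continuous hmax (fun x => le_max_right x 0)
  have cZn : Continuous (fun x => - Z' x) := cZ.neg
  have hp : 0 < σp ^ 2 := by positivity
  have hm : 0 < σm ^ 2 := by positivity
  set A : ℝ → ℝ := fun θ => σp ^ 2 * occPos Z' θ + σm ^ 2 * occNeg Z' θ with hAdef
  have hAc : Continuous A := by
    have h1 := occPos_cont Z' cZ
    have h2 := occPos_cont _ cZn
    rw [← occNeg_eq] at h2
    exact (continuous_const.mul h1).add (continuous_const.mul h2)
  have hA0 : A 0 = 0 := by simp [hAdef, occPos, occNeg]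
  have hocc' : ∀ θ, 0 ≤ θ → occPos Z' θ + occNeg Z' θ = θ := by
    intro θ h
    rw [occPos_congr Z h, occNeg_congr Z h]; exact hocc θ h
  obtain ⟨c, hc, hcp, hcm⟩ : ∃ c : ℝ, 0 < c ∧ c ≤ σp ^ 2 ∧ c ≤ σm ^ 2 :=
    ⟨min (σp ^ 2) (σm ^ 2), lt_min hp hm, min_le_left _ _, min_le_right _ _⟩
  have hgrow : ∀ s t, 0 ≤ s → s ≤ t → c * (t - s) ≤ A t - A s := by
    intro s t hs hst
    have h1 := occPos_mono Z' cZ hst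
    have h2 := occPos_mono _ cZn hst
    rw [← occNeg_eq] at h2
    have h3 := hocc' s hs
    have h4 := hocc' t (hs.trans hst)
    have h5 := mul_le_mul_of_nonneg_right hcp (sub_nonneg.2 h1)
    have h6 := mul_le_mul_of_nonneg_right hcm (sub_nonneg.2 h2)
    have h7 : t - s = (occPos Z' t - occPos Z' s) + (occNeg Z' t - occNeg Z' s) := by linarith
    rw [h7, mul_add]
    simp only [hAdef]
    linarith
  have hAm : StrictMonoOn A (Ici 0) := by
    intro s hs t _ hst
    have := hgrow s t hs hst.le
    have := mul_pos hc (sub_pos.2 hst)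
    linarith
  have hAnn : ∀ s, 0 ≤ s → 0 ≤ A s := by
    intro s hs
    have := hAm.monotoneOn self_mem_Ici hs hs
    rwa [hA0] at this
  have hAsurj : ∀ t, 0 ≤ t → ∃ s, 0 ≤ s ∧ A s = t := by
    intro t ht
    have h0 : 0 ≤ t / c := by positivity
    have h1 := hgrow 0 (t / c) le_rfl h0
    rw [hA0, sub_zero, sub_zero, mul_div_cancel₀ _ hc.ne'] at h1
    obtain ⟨s, hs, h⟩ := intermediate_value_Icc h0 hAc.continuousOn
      (show t ∈ Icc (A 0) (A (t / c)) from ⟨by rw [hA0]; exact ht, h1⟩)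
    exact ⟨s, hs.1, h⟩
  have hZB : ∀ s, 0 ≤ s → Z s = B (A s) := by
    intro s hs
    rw [hrep s hs]
    simp only [hAdef]
    rw [occPos_congr Z hs, occNeg_congr Z hs]
  have hrep' : ∀ s, 0 ≤ s → Z' s = B' (A s) := by
    intro s hs
    simp only [hB', hZ']
    rw [max_eq_left hs, max_eq_left (hAnn s hs), hZB s hs]
  have hdp : ∀ s, 0 < Z' s → HasDerivAt A (σp ^ 2) s := by
    intro s hs
    have h1 := occPos_deriv_pos Z' cZ hs
    have h2 := occPos_deriv_neg _ cZn (s := s) (neg_lt_zero.2 hs)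
    rw [← occNeg_eq] at h2
    have := (h1.const_mul (σp ^ 2)).add (h2.const_mul (σm ^ 2))
    rw [mul_one, mul_zero, add_zero] at this
    exact this
  have hdm : ∀ s, 0 < - Z' s → HasDerivAt A (σm ^ 2) s := by
    intro s hs
    have h1 := occPos_deriv_neg Z' cZ (s := s) (by linarith)
    have h2 := occPos_deriv_pos _ cZn (s := s) hs
    rw [← occNeg_eq] at h2
    have := (h1.const_mul (σp ^ 2)).add (h2.const_mul (σm ^ 2))
    rw [mul_one, mul_zero, zero_add] at this
    exact this
  set Θ : ℝ → ℝ := fun t => (σp ^ 2)⁻¹ * occPos B t + (σm ^ 2)⁻¹ * occNeg B t with hΘ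
  have hΘA : ∀ θ, 0 ≤ θ → Θ (A θ) = θ := by
    intro θ hθ
    have h1 := occPos_image A B' Z' (σp ^ 2) θ hp.le hθ cB cZ hAm hAc hA0 hrep' hdp
    have h2 := occPos_image A (fun x => - B' x) (fun x => - Z' x) (σm ^ 2) θ hm.le hθ cB.neg
      cZn hAm hAc hA0 (fun s hs => by rw [hrep' s hs]) hdm
    rw [← occNeg_eq, ← occNeg_eq, occNeg_congr B (hAnn θ hθ)] at h2
    rw [occPos_congr B (hAnn θ hθ)] at h1
    simp only [hΘ]
    rw [h1, h2, inv_mul_cancel_left₀ hp.ne', inv_mul_cancel_left₀ hm.ne']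
    exact hocc' θ hθ
  have hAΘ : ∀ t, 0 ≤ t → A (Θ t) = t := by
    intro t ht
    obtain ⟨s, hs, rfl⟩ := hAsurj t ht
    rw [hΘA s hs]
  have hΘm : StrictMonoOn Θ (Ici 0) := by
    intro x hx y hy hxy
    obtain ⟨s, hs, rfl⟩ := hAsurj x hx
    obtain ⟨t, ht, rfl⟩ := hAsurj y hy
    rw [hΘA s hs, hΘA t ht]
    exact (hAm.lt_iff_lt hs ht).1 hxy
  have hΘc : ContinuousOn Θ (Ici 0) := by
    have h1 := occPos_cont B' cB
    have h2 := occPos_cont (fun x => - B' x) cB.neg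
    rw [← occNeg_eq] at h2
    have h3 := (continuous_const (y := (σp ^ 2)⁻¹)).mul h1 |>.add
      ((continuous_const (y := (σm ^ 2)⁻¹)).mul h2)
    refine h3.continuousOn.congr ?_
    intro t ht
    have e1 : occPos B' t = occPos B t := occPos_congr B ht
    have e2 : occNeg B' t = occNeg B t := occNeg_congr B ht
    simp only [hΘ, Pi.add_apply, Pi.mul_apply, e1, e2]
  exact ⟨Θ, A, fun _ => rfl, hΘc, hΘm, hAc.continuousOn, hAnn, hAΘ, hΘA, hZB⟩
end

section
/- (Lemma on the pathwise maps Φ±.) For every (z₊, z₋) ∈ 𝒟 and every θ ≥ 0, the sets {ν ∈ [0,θ] : λ₊(ν) = λ₋(θ−ν)} and {ν ∈ [0,θ] : λ₋(ν) = λ₊(θ−ν)} are nonempty and the maximum defining p₊(θ) and the minimum defining p₋(θ) are attained. Moreover, the functions p₊ and p₋ are continuous and nondecreasing, p₊(0) = p₋(0) = 0, λ₊ ∘ p₊ = λ₋ ∘ p₋ identically, and p₊(θ) + p₋(θ) = θ for all θ ≥ 0. -/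
open Set Filter

/-- The Skorohod map: `Γ(z)(θ) = max(0, sup_{0 ≤ ν ≤ θ} (−z(ν)))`. -/
noncomputable def skorohod (z : ℝ → ℝ) (θ : ℝ) : ℝ :=
  max 0 (sSup ((fun ν => -z ν) '' Set.Icc 0 θ))

theorem skorohod_cont (z : ℝ → ℝ) (hz : ContinuousOn z (Set.Ici 0)) :
    ContinuousOn (skorohod z) (Set.Ici 0) := by
  have hc : Continuous (fun x : ℝ => z (max 0 x)) :=
    hz.comp_continuous (by fun_prop) (fun x => le_max_left 0 x)
  have h1 : Continuous (fun θ : ℝ =>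
      sSup ((fun t : ℝ => -z (max 0 (t * θ))) '' Set.Icc (0:ℝ) 1)) := by
    apply IsCompact.continuous_sSup (f := fun (θ t : ℝ) => -z (max 0 (t * θ))) isCompact_Icc
    have : Continuous (fun q : ℝ × ℝ => -z (max 0 (q.2 * q.1))) :=
      (hc.comp (by fun_prop : Continuous (fun q : ℝ × ℝ => q.2 * q.1))).neg
    exact this
  have h2 := (continuous_const (y := (0:ℝ))).max h1
  refine h2.continuousOn.congr ?_
  intro θ hθ
  have hθ' : (0:ℝ) ≤ θ := hθ
  have : (fun ν => -z ν) '' Set.Icc 0 θ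
      = (fun t : ℝ => -z (max 0 (t * θ))) '' Set.Icc (0:ℝ) 1 := by
    ext y
    constructor
    · rintro ⟨ν, ⟨h0, h1⟩, rfl⟩
      rcases hθ'.eq_or_lt with h | h
      · refine ⟨0, by simp, ?_⟩
        have : ν = 0 := by linarith
        simp [this]
      · refine ⟨ν / θ, ⟨by positivity, by rw [div_le_one h]; exact h1⟩, ?_⟩
        have : ν / θ * θ = ν := by field_simp
        simp [this, h0]
    · rintro ⟨t, ⟨h0, h1⟩, rfl⟩
      refine ⟨t * θ, ⟨by positivity, by nlinarith⟩, ?_⟩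
      have : 0 ≤ t * θ := by positivity
      simp [this]
  simp only [skorohod, this]

theorem skorohod_mono (z : ℝ → ℝ) (hz : ContinuousOn z (Set.Ici 0)) :
    MonotoneOn (skorohod z) (Set.Ici 0) := by
  intro a ha b hb hab
  unfold skorohod
  apply max_le_max le_rfl
  apply csSup_le_csSup
  · exact (isCompact_Icc.image_of_continuousOn
      ((hz.mono (fun x hx => hx.1)).neg)).bddAbove
  · exact ⟨_, 0, ⟨le_rfl, ha⟩, rfl⟩
  · exact Set.image_mono (Set.Icc_subset_Icc le_rfl hab)

theorem skorohod_zero (z : ℝ → ℝ) (hz : z 0 = 0) : skorohod z 0 = 0 := by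
  simp [skorohod, hz]

/-- Intermediate value step. -/
theorem crossing_exists (f g : ℝ → ℝ) (hf : ContinuousOn f (Set.Ici 0))
    (hg : ContinuousOn g (Set.Ici 0)) (θ a b : ℝ) (ha : 0 ≤ a) (hab : a ≤ b) (hb : b ≤ θ)
    (h1 : f a ≤ g (θ - a)) (h2 : g (θ - b) ≤ f b) :
    ∃ ν ∈ Set.Icc a b, f ν = g (θ - ν) := by
  have hc : ContinuousOn (fun ν => f ν - g (θ - ν)) (Set.Icc a b) := by
    apply ContinuousOn.sub
    · exact hf.mono (fun x hx => ha.trans hx.1)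
    · exact hg.comp (by fun_prop) (fun x hx => by
        have := hx.2
        simp only [Set.mem_Ici]; linarith)
  obtain ⟨ν, hν, h⟩ := intermediate_value_Icc hab hc
    (show (0:ℝ) ∈ _ from ⟨by linarith, by linarith⟩)
  exact ⟨ν, hν, by simp only at h; linarith⟩

theorem crossing_greatest (f g : ℝ → ℝ) (hf : ContinuousOn f (Set.Ici 0))
    (hg : ContinuousOn g (Set.Ici 0)) (mf : MonotoneOn f (Set.Ici 0))
    (mg : MonotoneOn g (Set.Ici 0)) (hf0 : f 0 = 0) (hg0 : g 0 = 0) (θ : ℝ) (hθ : 0 ≤ θ) :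
    ∃ p, IsGreatest {ν ∈ Set.Icc 0 θ | f ν = g (θ - ν)} p := by
  have fθ := mf (Set.mem_Ici.2 le_rfl) (Set.mem_Ici.2 hθ) hθ
  have gθ := mg (Set.mem_Ici.2 le_rfl) (Set.mem_Ici.2 hθ) hθ
  obtain ⟨ν, hν, h⟩ := crossing_exists f g hf hg θ 0 θ le_rfl hθ le_rfl
    (by rw [sub_zero]; linarith) (by rw [sub_self]; linarith)
  have hcl : IsClosed {ν ∈ Set.Icc 0 θ | f ν = g (θ - ν)} := by
    have hc : ContinuousOn (fun ν => f ν - g (θ - ν)) (Set.Icc 0 θ) := by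
      apply ContinuousOn.sub
      · exact hf.mono (fun x hx => hx.1)
      · exact hg.comp (by fun_prop) (fun x hx => by
          have := hx.2
          simp only [Set.mem_Ici]; linarith)
    have := hc.preimage_isClosed_of_isClosed isClosed_Icc (isClosed_singleton (x := (0:ℝ)))
    convert this using 1
    ext x
    simp [sub_eq_zero]
  have hco := isCompact_Icc.of_isClosed_subset hcl (fun x hx => hx.1)
  exact hco.exists_isGreatest ⟨ν, hν, h⟩

theorem lip_cont (p q : ℝ → ℝ) (mp : MonotoneOn p (Set.Ici 0)) (mq : MonotoneOn q (Set.Ici 0))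
    (hs : ∀ θ ∈ Set.Ici (0:ℝ), p θ + q θ = θ) : ContinuousOn p (Set.Ici 0) := by
  have key : ∀ a ∈ Set.Ici (0:ℝ), ∀ b ∈ Set.Ici (0:ℝ), a ≤ b → |p a - p b| ≤ |a - b| := by
    intro a ha b hb hab
    have h1 := mp ha hb hab
    have h2 := mq ha hb hab
    have h3 := hs a ha
    have h4 := hs b hb
    rw [abs_of_nonpos (by linarith), abs_of_nonpos (by linarith)]
    linarith
  have : LipschitzOnWith 1 p (Set.Ici 0) := by
    apply LipschitzOnWith.of_dist_le_mul
    intro a ha b hb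
    simp only [Real.dist_eq, NNReal.coe_one, one_mul]
    rcases le_total a b with h | h
    · exact key a ha b hb h
    · rw [abs_sub_comm, abs_sub_comm a]; exact key b hb a ha h
  exact this.continuousOn

/-- Lemma on the pathwise maps `Φ±`: for `(z₊, z₋) ∈ 𝒟` the maxima/minima defining
`p₊(θ)` and `p₋(θ)` are attained (in particular the corresponding sets are nonempty),
and the resulting functions `p₊, p₋` are continuous, nondecreasing, vanish at `0`,
satisfy `λ₊ ∘ p₊ = λ₋ ∘ p₋` and `p₊(θ) + p₋(θ) = θ` for all `θ ≥ 0`. -/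
theorem pathwise_maps_props
    (zp zm : ℝ → ℝ)
    (hzp : ContinuousOn zp (Set.Ici 0)) (hzm : ContinuousOn zm (Set.Ici 0))
    (hzp0 : zp 0 = 0) (hzm0 : zm 0 = 0)
    (hzpinf : Filter.liminf (fun θ => (zp θ : EReal)) Filter.atTop = ⊥)
    (hzminf : Filter.liminf (fun θ => (zm θ : EReal)) Filter.atTop = ⊥) :
    ∃ pp pm : ℝ → ℝ,
      (∀ θ ∈ Set.Ici (0:ℝ),
        IsGreatest {ν ∈ Set.Icc 0 θ | skorohod zp ν = skorohod zm (θ - ν)} (pp θ)) ∧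
      (∀ θ ∈ Set.Ici (0:ℝ),
        IsLeast {ν ∈ Set.Icc 0 θ | skorohod zm ν = skorohod zp (θ - ν)} (pm θ)) ∧
      ContinuousOn pp (Set.Ici 0) ∧ ContinuousOn pm (Set.Ici 0) ∧
      MonotoneOn pp (Set.Ici 0) ∧ MonotoneOn pm (Set.Ici 0) ∧
      pp 0 = 0 ∧ pm 0 = 0 ∧
      (∀ θ ∈ Set.Ici (0:ℝ), skorohod zp (pp θ) = skorohod zm (pm θ)) ∧
      (∀ θ ∈ Set.Ici (0:ℝ), pp θ + pm θ = θ) := by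
  have cf := skorohod_cont zp hzp
  have cg := skorohod_cont zm hzm
  have mf := skorohod_mono zp hzp
  have mg := skorohod_mono zm hzm
  have f0 := skorohod_zero zp hzp0
  have g0 := skorohod_zero zm hzm0
  generalize skorohod zp = f at *
  generalize skorohod zm = g at *
  have hex : ∀ θ : ℝ, ∃ p, 0 ≤ θ → IsGreatest {ν ∈ Set.Icc 0 θ | f ν = g (θ - ν)} p := by
    intro θ
    by_cases h : 0 ≤ θ
    · obtain ⟨p, hp⟩ := crossing_greatest f g cf cg mf mg f0 g0 θ h
      exact ⟨p, fun _ => hp⟩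
    · exact ⟨0, fun h' => absurd h' h⟩
  choose p hp using hex
  have hsum : ∀ θ ∈ Set.Ici (0:ℝ), p θ + (θ - p θ) = θ := fun θ _ => by ring
  have mp : MonotoneOn p (Set.Ici 0) := by
    intro a ha b hb hab
    obtain ⟨⟨⟨h0, h1⟩, h2⟩, -⟩ := hp a ha
    have e1 : g (a - p a) ≤ g (b - p a) :=
      mg (Set.mem_Ici.2 (by linarith)) (Set.mem_Ici.2 (by linarith)) (by linarith)
    have e2 : f 0 ≤ f b := mf (Set.mem_Ici.2 le_rfl) hb hb
    obtain ⟨ν, hν, h⟩ := crossing_exists f g cf cg b (p a) b h0 (h1.trans hab) le_rfl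
      (by linarith) (by rw [sub_self]; linarith)
    exact hν.1.trans ((hp b hb).2 ⟨⟨h0.trans hν.1, hν.2⟩, h⟩)
  have mq : MonotoneOn (fun θ => θ - p θ) (Set.Ici 0) := by
    intro a ha b hb hab
    obtain ⟨⟨⟨h0, h1⟩, h2⟩, -⟩ := hp b hb
    obtain ⟨⟨⟨k0, k1⟩, k2⟩, kmax⟩ := hp a ha
    simp only
    by_cases hc : a ≤ b - p b
    · linarith
    · push Not at hc
      have e1 : f (a - (b - p b)) ≤ f (p b) :=
        mf (Set.mem_Ici.2 (by linarith)) h0 (by linarith)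
      have e2 : f 0 ≤ f a := mf (Set.mem_Ici.2 le_rfl) ha ha
      obtain ⟨ν, hν, h⟩ := crossing_exists f g cf cg a (a - (b - p b)) a (by linarith)
        (by linarith) le_rfl
        (by rw [sub_sub_cancel]; linarith) (by rw [sub_self]; linarith)
      have := kmax ⟨⟨by linarith [hν.1], hν.2⟩, h⟩
      linarith [hν.1]
  have p0 : p 0 = 0 := le_antisymm (hp 0 le_rfl).1.1.2 (hp 0 le_rfl).1.1.1
  refine ⟨p, fun θ => θ - p θ, fun θ hθ => hp θ hθ, ?_, lip_cont _ _ mp mq hsum,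
    lip_cont _ _ mq mp (fun θ _ => by ring), mp, mq, p0, by simp [p0],
    fun θ hθ => (hp θ hθ).1.2, hsum⟩
  intro θ hθ
  obtain ⟨⟨⟨h0, h1⟩, h2⟩, hmax⟩ := hp θ hθ
  refine ⟨⟨⟨by linarith, by linarith⟩, ?_⟩, ?_⟩
  · rw [sub_sub_cancel]; exact h2.symm
  · rintro ν ⟨⟨n0, n1⟩, n2⟩
    have := hmax (a := θ - ν) ⟨⟨by linarith, by linarith⟩, by rw [sub_sub_cancel]; exact n2.symm⟩
    simp only
    linarith
end

section
/- (Complementarity identity, equation (2.35).) For every (z₊, z₋) ∈ 𝒟 and every θ ≥ 0, the two nonnegative quantities (z₊ + λ₊)(p₊(θ)) and (z₋ + λ₋)(p₋(θ)) satisfy (z₊ + λ₊)(p₊(θ)) · (z₋ + λ₋)(p₋(θ)) = 0; that is, at each time at least one of them vanishes. -/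
open Set Filter

lemma skor_le {z : ℝ → ℝ} (hz : ContinuousOn z (Set.Ici 0)) {x y : ℝ} (hy : 0 ≤ y)
    (hyx : y ≤ x) : -z y ≤ skorohod z x := by
  have hc : ContinuousOn (fun ν => -z ν) (Set.Icc 0 x) :=
    (hz.mono Set.Icc_subset_Ici_self).neg
  exact le_max_of_le_right
    (le_csSup (isCompact_Icc.image_of_continuousOn hc).bddAbove ⟨y, ⟨hy, hyx⟩, rfl⟩)

lemma skor_nonneg (z : ℝ → ℝ) (x : ℝ) : 0 ≤ skorohod z x := le_max_left _ _

lemma skor_attained {z : ℝ → ℝ} (hz : ContinuousOn z (Set.Ici 0)) {x : ℝ} (hx : 0 ≤ x) :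
    skorohod z x = 0 ∨ ∃ y, 0 ≤ y ∧ y ≤ x ∧ skorohod z x = -z y := by
  have hc : ContinuousOn (fun ν => -z ν) (Set.Icc 0 x) :=
    (hz.mono Set.Icc_subset_Ici_self).neg
  obtain ⟨y, hy, h⟩ := (isCompact_Icc.image_of_continuousOn hc).sSup_mem
    ((Set.nonempty_Icc.2 hx).image _)
  rcases max_choice 0 (sSup ((fun ν => -z ν) '' Set.Icc 0 x)) with h1 | h1
  · exact Or.inl h1
  · exact Or.inr ⟨y, hy.1, hy.2, h1.trans h.symm⟩

lemma skor_locconst {z : ℝ → ℝ} (hz : ContinuousOn z (Set.Ici 0)) {b : ℝ} (hb : 0 ≤ b)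
    (hpos : 0 < z b + skorohod z b) :
    ∃ δ > 0, ∀ x, 0 ≤ x → |x - b| < δ → skorohod z x = skorohod z b := by
  obtain ⟨δ, hδ, H⟩ := Metric.continuousOn_iff.1 hz b hb _ hpos
  have H' : ∀ y, 0 ≤ y → |y - b| < δ → -z y < skorohod z b := by
    intro y hy hyb
    have := H y hy (by rwa [Real.dist_eq])
    rw [Real.dist_eq, abs_lt] at this
    linarith [this.1]
  refine ⟨δ, hδ, fun x hx hxb => le_antisymm ?_ ?_⟩
  · rcases skor_attained hz hx with h | ⟨y, hy, hyx, h⟩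
    · rw [h]; exact skor_nonneg _ _
    · rw [h]
      rcases le_total y b with hyb | hyb
      · exact skor_le hz hy hyb
      · refine (H' y hy ?_).le
        rw [abs_lt] at *
        constructor <;> linarith [hxb.2]
  · rcases skor_attained hz hb with h | ⟨y, hy, hyb, h⟩
    · rw [h]; exact skor_nonneg _ _
    · rcases le_total y x with hyx | hyx
      · rw [h]; exact skor_le hz hy hyx
      · have := H' y hy (by
          rw [abs_lt] at *
          constructor <;> linarith [hxb.1])
        linarith

/-- Complementarity identity (equation (2.35)): for `(z₊, z₋) ∈ 𝒟` and `θ ≥ 0`, the two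
nonnegative quantities `(z₊ + λ₊)(p₊(θ))` and `(z₋ + λ₋)(p₋(θ))` have product zero,
i.e. at each time at least one of them vanishes. -/
theorem complementarity_identity
    (zp zm : ℝ → ℝ)
    (hzp : ContinuousOn zp (Set.Ici 0)) (hzm : ContinuousOn zm (Set.Ici 0))
    (hzp0 : zp 0 = 0) (hzm0 : zm 0 = 0)
    (hzpinf : Filter.liminf (fun θ => (zp θ : EReal)) Filter.atTop = ⊥)
    (hzminf : Filter.liminf (fun θ => (zm θ : EReal)) Filter.atTop = ⊥)
    (pp pm : ℝ → ℝ)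
    (hpp : ∀ θ ∈ Set.Ici (0:ℝ),
      IsGreatest {ν ∈ Set.Icc 0 θ | skorohod zp ν = skorohod zm (θ - ν)} (pp θ))
    (hpm : ∀ θ ∈ Set.Ici (0:ℝ),
      IsLeast {ν ∈ Set.Icc 0 θ | skorohod zm ν = skorohod zp (θ - ν)} (pm θ)) :
    ∀ θ ∈ Set.Ici (0:ℝ),
      0 ≤ zp (pp θ) + skorohod zp (pp θ) ∧
      0 ≤ zm (pm θ) + skorohod zm (pm θ) ∧
      (zp (pp θ) + skorohod zp (pp θ)) * (zm (pm θ) + skorohod zm (pm θ)) = 0 := by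
  intro θ hθ
  obtain ⟨⟨⟨ha0, haθ⟩, haeq⟩, hamax⟩ := hpp θ hθ
  obtain ⟨⟨⟨hb0, hbθ⟩, hbeq⟩, hbmin⟩ := hpm θ hθ
  have h1 : pm θ ≤ θ - pp θ :=
    hbmin ⟨⟨by linarith, by linarith⟩, by rw [sub_sub_cancel]; exact haeq.symm⟩
  have h2 : θ - pm θ ≤ pp θ :=
    hamax ⟨⟨by linarith, by linarith⟩, by rw [sub_sub_cancel]; exact hbeq.symm⟩
  have hab : θ - pp θ = pm θ := by linarith
  have n1 := skor_le hzp ha0 le_rfl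
  have n2 := skor_le hzm hb0 le_rfl
  refine ⟨by linarith, by linarith, ?_⟩
  by_contra hne
  obtain ⟨e1, e2⟩ := mul_ne_zero_iff.1 hne
  have p1 : 0 < zp (pp θ) + skorohod zp (pp θ) := lt_of_le_of_ne (by linarith) e1.symm
  have p2 : 0 < zm (pm θ) + skorohod zm (pm θ) := lt_of_le_of_ne (by linarith) e2.symm
  have hbpos : 0 < pm θ := by
    refine lt_of_le_of_ne hb0 fun h => ?_
    rw [← h, hzm0] at p2
    rcases skor_attained hzm le_rfl with h' | ⟨y, hy, hy', h'⟩
    · linarith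
    · have : y = 0 := le_antisymm hy' hy
      rw [this, hzm0] at h'
      linarith
  obtain ⟨δ₁, hδ₁, H1⟩ := skor_locconst hzp ha0 p1
  obtain ⟨δ₂, hδ₂, H2⟩ := skor_locconst hzm hb0 p2
  obtain ⟨ε, hε, hεlt⟩ := exists_between (lt_min (lt_min hδ₁ hδ₂) hbpos)
  rw [lt_min_iff, lt_min_iff] at hεlt
  obtain ⟨⟨l1, l2⟩, l3⟩ := hεlt
  have q1 := H1 (pp θ + ε) (by linarith) (by rw [abs_lt]; constructor <;> linarith)
  have q2 := H2 (pm θ - ε) (by linarith) (by rw [abs_lt]; constructor <;> linarith)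
  have : pp θ + ε ≤ pp θ := hamax ⟨⟨by linarith, by linarith⟩, by
    rw [q1, haeq, hab, ← q2]; congr 1; linarith⟩
  linarith
end

section
/- (Absolute value and local time identities, equations (2.32)–(2.33).) For every (z₊, z₋) ∈ 𝒟 one has |z| = z₊ ∘ p₊ + z₋ ∘ p₋ + Γ(z₊ ∘ p₊ + z₋ ∘ p₋) identically on [0,∞), and moreover Γ(z₊ ∘ p₊ + z₋ ∘ p₋) = λ₊ ∘ p₊ + λ₋ ∘ p₋ = 2 λ₊ ∘ p₊ = 2 λ₋ ∘ p₋. -/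
open Set Filter

lemma sk_greatest {z : ℝ → ℝ} (hz : ContinuousOn z (Set.Ici 0)) (hz0 : z 0 = 0) {θ : ℝ}
    (hθ : 0 ≤ θ) : IsGreatest ((fun ν => -z ν) '' Set.Icc 0 θ) (skorohod z θ) := by
  have hc : IsCompact ((fun ν => -z ν) '' Set.Icc 0 θ) :=
    isCompact_Icc.image_of_continuousOn ((hz.mono Icc_subset_Ici_self).neg)
  have h0 : (0 : ℝ) ∈ ((fun ν => -z ν) '' Set.Icc 0 θ) := ⟨0, ⟨le_rfl, hθ⟩, by simp [hz0]⟩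
  have hg := hc.isGreatest_sSup ⟨0, h0⟩
  unfold skorohod
  rw [max_eq_right (hg.2 h0)]
  exact hg

lemma sk_ge {z : ℝ → ℝ} (hz : ContinuousOn z (Set.Ici 0)) (hz0 : z 0 = 0) {θ : ℝ}
    (hθ : 0 ≤ θ) {s : ℝ} (hs : s ∈ Set.Icc 0 θ) : -z s ≤ skorohod z θ :=
  (sk_greatest hz hz0 hθ).2 ⟨s, hs, rfl⟩

lemma sk_att {z : ℝ → ℝ} (hz : ContinuousOn z (Set.Ici 0)) (hz0 : z 0 = 0) {θ : ℝ}
    (hθ : 0 ≤ θ) : ∃ s ∈ Set.Icc 0 θ, z s = -skorohod z θ := by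
  obtain ⟨s, hs, h⟩ := (sk_greatest hz hz0 hθ).1
  exact ⟨s, hs, by rw [← h]; simp⟩

lemma sk_mono {z : ℝ → ℝ} (hz : ContinuousOn z (Set.Ici 0)) (hz0 : z 0 = 0) {a b : ℝ}
    (ha : 0 ≤ a) (hab : a ≤ b) : skorohod z a ≤ skorohod z b := by
  obtain ⟨s, hs, h⟩ := sk_att hz hz0 ha
  have := sk_ge hz hz0 (ha.trans hab) ⟨hs.1, hs.2.trans hab⟩
  linarith

lemma sk_first {z : ℝ → ℝ} (hz : ContinuousOn z (Set.Ici 0)) (hz0 : z 0 = 0) {θ : ℝ}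
    (hθ : 0 ≤ θ) : ∃ s ∈ Set.Icc 0 θ, z s = -skorohod z θ ∧
      ∀ t ∈ Set.Icc 0 θ, z t = -skorohod z θ → s ≤ t := by
  have hcl : IsClosed (Set.Icc 0 θ ∩ z ⁻¹' {-skorohod z θ}) :=
    (hz.mono Icc_subset_Ici_self).preimage_isClosed_of_isClosed isClosed_Icc isClosed_singleton
  have hc : IsCompact (Set.Icc 0 θ ∩ z ⁻¹' {-skorohod z θ}) :=
    isCompact_Icc.of_isClosed_subset hcl inter_subset_left
  obtain ⟨s, hs, h⟩ := sk_att hz hz0 hθ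
  obtain ⟨m, hm, hl⟩ := hc.exists_isLeast ⟨s, hs, h⟩
  exact ⟨m, hm.1, hm.2, fun t ht h => hl ⟨ht, h⟩⟩

/-- Absolute value and local time identities (equations (2.32)–(2.33)): with
`z = z₊ ∘ p₊ − z₋ ∘ p₋`, one has
`|z| = z₊ ∘ p₊ + z₋ ∘ p₋ + Γ(z₊ ∘ p₊ + z₋ ∘ p₋)` on `[0,∞)`, and
`Γ(z₊ ∘ p₊ + z₋ ∘ p₋) = λ₊ ∘ p₊ + λ₋ ∘ p₋ = 2 λ₊ ∘ p₊ = 2 λ₋ ∘ p₋`. -/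
theorem abs_and_local_time_identities
    (zp zm : ℝ → ℝ)
    (hzp : ContinuousOn zp (Set.Ici 0)) (hzm : ContinuousOn zm (Set.Ici 0))
    (hzp0 : zp 0 = 0) (hzm0 : zm 0 = 0)
    (hzpinf : Filter.liminf (fun θ => (zp θ : EReal)) Filter.atTop = ⊥)
    (hzminf : Filter.liminf (fun θ => (zm θ : EReal)) Filter.atTop = ⊥)
    (pp pm : ℝ → ℝ)
    (hpp : ∀ θ ∈ Set.Ici (0:ℝ),
      IsGreatest {ν ∈ Set.Icc 0 θ | skorohod zp ν = skorohod zm (θ - ν)} (pp θ))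
    (hpm : ∀ θ ∈ Set.Ici (0:ℝ),
      IsLeast {ν ∈ Set.Icc 0 θ | skorohod zm ν = skorohod zp (θ - ν)} (pm θ)) :
    ∀ θ ∈ Set.Ici (0:ℝ),
      |zp (pp θ) - zm (pm θ)| =
        zp (pp θ) + zm (pm θ) + skorohod (fun ν => zp (pp ν) + zm (pm ν)) θ ∧
      skorohod (fun ν => zp (pp ν) + zm (pm ν)) θ =
        skorohod zp (pp θ) + skorohod zm (pm θ) ∧
      skorohod (fun ν => zp (pp ν) + zm (pm ν)) θ = 2 * skorohod zp (pp θ) ∧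
      skorohod (fun ν => zp (pp ν) + zm (pm ν)) θ = 2 * skorohod zm (pm θ) := by
  -- reflection
  have hrefl : ∀ θ, 0 ≤ θ → pm θ = θ - pp θ := by
    intro θ hθ
    obtain ⟨⟨⟨h1, h2⟩, h3⟩, h4⟩ := hpp θ hθ
    obtain ⟨⟨⟨g1, g2⟩, g3⟩, g4⟩ := hpm θ hθ
    have e1 : θ - pm θ ≤ pp θ := h4 ⟨⟨by linarith, by linarith⟩, by
      rw [show θ - (θ - pm θ) = pm θ by ring]; exact g3.symm⟩
    have e2 : pm θ ≤ θ - pp θ := g4 ⟨⟨by linarith, by linarith⟩, by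
      rw [show θ - (θ - pp θ) = pp θ by ring]; exact h3.symm⟩
    linarith
  have hp0 : ∀ θ, 0 ≤ θ → 0 ≤ pp θ := fun θ hθ => (hpp θ hθ).1.1.1
  have hm0 : ∀ θ, 0 ≤ θ → 0 ≤ pm θ := fun θ hθ => (hpm θ hθ).1.1.1
  have hL : ∀ θ, 0 ≤ θ → skorohod zp (pp θ) = skorohod zm (pm θ) := by
    intro θ hθ
    rw [hrefl θ hθ]; exact (hpp θ hθ).1.2
  have hmax : ∀ θ, 0 ≤ θ → ∀ ε, 0 < ε → ε ≤ pm θ →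
      skorohod zp (pp θ + ε) ≠ skorohod zm (pm θ - ε) := by
    intro θ hθ ε hε hle heq
    have h1 := hrefl θ hθ
    have h2 := hp0 θ hθ
    have := (hpp θ hθ).2 (show pp θ + ε ∈ _ from ⟨⟨by linarith, by linarith⟩, by
      rw [heq, h1]; congr 1; ring⟩)
    linarith
  have hmono : ∀ ν θ, 0 ≤ ν → ν ≤ θ → skorohod zp (pp ν) ≤ skorohod zp (pp θ) := by
    intro ν θ hν hνθ
    have hθ := hν.trans hνθ
    by_contra! hlt
    have h1 : pp θ < pp ν := by
      by_contra! h
      exact absurd (sk_mono hzp hzp0 (hp0 ν hν) h) (not_le.mpr hlt)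
    have h2 : pm θ < pm ν := by
      by_contra! h
      have := sk_mono hzm hzm0 (hm0 ν hν) h
      rw [← hL ν hν, ← hL θ hθ] at this
      linarith
    have := hrefl ν hν
    have := hrefl θ hθ
    linarith
  intro θ hθ
  have hθ : 0 ≤ θ := hθ
  have ha := hp0 θ hθ
  have hb := hm0 θ hθ
  have hab := hrefl θ hθ
  have hLL := hL θ hθ
  -- the local time
  have key : skorohod (fun ν => zp (pp ν) + zm (pm ν)) θ = 2 * skorohod zp (pp θ) := by
    have hG : IsGreatest ((fun ν => -(zp (pp ν) + zm (pm ν))) '' Set.Icc 0 θ)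
        (2 * skorohod zp (pp θ)) := by
      constructor
      · obtain ⟨a0, ⟨ha0, ha0a⟩, hza, hamin⟩ := sk_first hzp hzp0 ha
        obtain ⟨b0, ⟨hb0, hb0b⟩, hzb, hbmin⟩ := sk_first hzm hzm0 hb
        have hν : 0 ≤ a0 + b0 := by linarith
        have hsa : skorohod zp a0 = skorohod zp (pp θ) :=
          le_antisymm (sk_mono hzp hzp0 ha0 ha0a)
            (by have := sk_ge hzp hzp0 ha0 ⟨ha0, le_rfl⟩; linarith)
        have hsb : skorohod zm b0 = skorohod zm (pm θ) :=
          le_antisymm (sk_mono hzm hzm0 hb0 hb0b)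
            (by have := sk_ge hzm hzm0 hb0 ⟨hb0, le_rfl⟩; linarith)
        have hge : a0 ≤ pp (a0 + b0) := (hpp _ hν).2 ⟨⟨ha0, by linarith⟩, by
          rw [add_sub_cancel_left, hsa, hsb, hLL]⟩
        have hr := hrefl _ hν
        have hbge : b0 ≤ pm (a0 + b0) := by
          have hm := hm0 _ hν
          obtain ⟨s, ⟨hs0, hs1⟩, hs⟩ := sk_att hzm hzm0 hm
          have e1 := sk_mono hzp hzp0 ha0 hge
          have e2 := sk_mono hzm hzm0 hm (show pm (a0 + b0) ≤ pm θ by linarith)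
          have e3 := hL _ hν
          have := hbmin s ⟨hs0, by linarith⟩ (by linarith)
          linarith
        have ea : pp (a0 + b0) = a0 := by linarith
        have eb : pm (a0 + b0) = b0 := by linarith
        refine ⟨a0 + b0, ⟨hν, by linarith⟩, ?_⟩
        simp only [ea, eb, hza, hzb, ← hLL]
        ring
      · rintro _ ⟨ν, ⟨hν0, hν1⟩, rfl⟩
        have e1 := sk_ge hzp hzp0 (hp0 ν hν0) ⟨hp0 ν hν0, le_rfl⟩
        have e2 := sk_ge hzm hzm0 (hm0 ν hν0) ⟨hm0 ν hν0, le_rfl⟩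
        have e3 := hL ν hν0
        have e4 := hmono ν θ hν0 hν1
        show -(zp (pp ν) + zm (pm ν)) ≤ _
        linarith
    unfold skorohod at hG ⊢
    rw [hG.csSup_eq]
    exact max_eq_right (mul_nonneg zero_le_two (le_max_left _ _))
  have hz : zp (pp θ) + skorohod zp (pp θ) = 0 ∨ zm (pm θ) + skorohod zm (pm θ) = 0 := by
    by_contra! hne
    have e1 := sk_ge hzp hzp0 ha ⟨ha, le_rfl⟩
    have e2 := sk_ge hzm hzm0 hb ⟨hb, le_rfl⟩
    have p1 : -skorohod zp (pp θ) < zp (pp θ) :=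
      lt_of_le_of_ne (by linarith) (fun h => hne.1 (by linarith))
    obtain ⟨s, ⟨hs0, hs1⟩, hs⟩ := sk_att hzm hzm0 hb
    have hsb : s < pm θ := lt_of_le_of_ne hs1 (fun h => hne.2 (by rw [← h] at hs ⊢; linarith))
    obtain ⟨δ, hδ, hd⟩ := Metric.mem_nhdsWithin_iff.mp
      ((hzp (pp θ) ha).eventually (lt_mem_nhds p1))
    set ε := min (δ / 2) (pm θ - s) with hεdef
    have hε : 0 < ε := lt_min (by linarith) (by linarith)
    have hε1 : ε ≤ δ / 2 := min_le_left _ _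
    have hε2 : ε ≤ pm θ - s := min_le_right _ _
    refine hmax θ hθ ε hε (by linarith) ?_
    have f1 : skorohod zp (pp θ + ε) = skorohod zp (pp θ) := by
      refine le_antisymm ?_ (sk_mono hzp hzp0 ha (by linarith))
      obtain ⟨t, ⟨ht0, ht1⟩, ht⟩ := sk_att hzp hzp0 (show 0 ≤ pp θ + ε by linarith)
      rcases le_total t (pp θ) with h | h
      · have := sk_ge hzp hzp0 ha ⟨ht0, h⟩
        linarith
      · have : -skorohod zp (pp θ) < zp t := hd ⟨by
          rw [Metric.mem_ball, Real.dist_eq, abs_of_nonneg (by linarith)]; linarith, ht0⟩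
        linarith
    have f2 : skorohod zm (pm θ - ε) = skorohod zm (pm θ) := by
      refine le_antisymm (sk_mono hzm hzm0 (by linarith) (by linarith)) ?_
      have := sk_ge hzm hzm0 (show 0 ≤ pm θ - ε by linarith) ⟨hs0, by linarith⟩
      linarith
    rw [f1, f2, hLL]
  refine ⟨?_, by rw [key]; linarith, key, by rw [key, hLL]⟩
  rw [key]
  have e1 := sk_ge hzp hzp0 ha ⟨ha, le_rfl⟩
  have e2 := sk_ge hzm hzm0 hb ⟨hb, le_rfl⟩
  rcases hz with h | h
  · rw [abs_of_nonpos (by linarith)]; linarith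
  · rw [abs_of_nonneg (by linarith)]; linarith
end

section
/- (Occupation-time bounds, equation (2.34).) For every (z₊, z₋) ∈ 𝒟 and every θ ≥ 0, one has ∫₀^θ 1{z(ν) > 0} dν ≤ p₊(θ) ≤ ∫₀^θ 1{z(ν) ≥ 0} dν and ∫₀^θ 1{z(ν) < 0} dν ≤ p₋(θ) ≤ ∫₀^θ 1{z(ν) ≤ 0} dν. -/
open Set Filter MeasureTheory

lemma sk_bdd {z : ℝ → ℝ} (hz : ContinuousOn z (Set.Ici 0)) (t : ℝ) :
    BddAbove ((fun ν => -z ν) '' Set.Icc 0 t) :=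
  (isCompact_Icc.image_of_continuousOn ((hz.mono Set.Icc_subset_Ici_self).neg)).bddAbove

lemma sk_nonneg (z : ℝ → ℝ) (t : ℝ) : 0 ≤ skorohod z t := le_max_left _ _

lemma sk_ge_s5 {z : ℝ → ℝ} (hz : ContinuousOn z (Set.Ici 0)) {t ν : ℝ} (h0 : 0 ≤ ν) (h1 : ν ≤ t) :
    -z ν ≤ skorohod z t :=
  le_trans (le_csSup (sk_bdd hz t) ⟨ν, ⟨h0, h1⟩, rfl⟩) (le_max_right _ _)

lemma sk_le {z : ℝ → ℝ} {t c : ℝ} (ht : 0 ≤ t) (hc : 0 ≤ c)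
    (h : ∀ ν, 0 ≤ ν → ν ≤ t → -z ν ≤ c) : skorohod z t ≤ c := by
  refine max_le hc (csSup_le ⟨_, ⟨0, ⟨le_rfl, ht⟩, rfl⟩⟩ ?_)
  rintro _ ⟨ν, hν, rfl⟩
  exact h ν hν.1 hν.2

lemma sk_mono_s5 {z : ℝ → ℝ} (hz : ContinuousOn z (Set.Ici 0)) {s t : ℝ} (h0 : 0 ≤ s) (h1 : s ≤ t) :
    skorohod z s ≤ skorohod z t :=
  sk_le h0 (sk_nonneg _ _) fun _ ha hb => sk_ge_s5 hz ha (hb.trans h1)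

lemma sk_zero {z : ℝ → ℝ} (hz0 : z 0 = 0) : skorohod z 0 = 0 := by
  simp [skorohod, hz0]

lemma sk_flat {z : ℝ → ℝ} (hz : ContinuousOn z (Set.Ici 0)) {a : ℝ} (ha : 0 ≤ a)
    (h : 0 < z a + skorohod z a) :
    ∃ ε > 0, ∀ s, 0 ≤ s → |s - a| < ε → skorohod z s = skorohod z a := by
  obtain ⟨ε, hε, H⟩ := Metric.continuousOn_iff.1 hz a ha ((z a + skorohod z a) / 2) (by linarith)
  have H' : ∀ s, 0 ≤ s → |s - a| < ε → -z s ≤ skorohod z a - (z a + skorohod z a) / 2 := by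
    intro s hs hsa
    have := H s hs (by rwa [Real.dist_eq])
    rw [Real.dist_eq, abs_lt] at this
    linarith [this.1]
  refine ⟨ε, hε, fun s hs hsa => ?_⟩
  rw [abs_lt] at hsa
  rcases le_total s a with hle | hle
  · refine le_antisymm (sk_mono_s5 hz hs hle) ?_
    by_contra! hlt
    have : skorohod z a ≤
        max (skorohod z s) (skorohod z a - (z a + skorohod z a) / 2) := by
      refine sk_le ha (le_max_of_le_left (sk_nonneg _ _)) fun ν h0 h1 => ?_
      rcases le_total ν s with h2 | h2
      · exact le_max_of_le_left (sk_ge_s5 hz h0 h2)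
      · exact le_max_of_le_right (H' ν h0 (by rw [abs_lt]; constructor <;> linarith))
    rcases le_max_iff.1 this with h3 | h3 <;> linarith
  · refine le_antisymm ?_ (sk_mono_s5 hz ha hle)
    refine sk_le hs (sk_nonneg _ _) fun ν h0 h1 => ?_
    rcases le_total ν a with h2 | h2
    · exact sk_ge_s5 hz h0 h2
    · have := H' ν h0 (by rw [abs_lt]; constructor <;> linarith)
      linarith

lemma occ_aux {p : ℝ → ℝ} (hp : Monotone p) {S : Set ℝ} (hS : MeasurableSet S)
    (h : ∀ u ∈ S, 0 ≤ u → ∃ ε > 0, ∀ s, u ≤ s → s < u + ε → p s = p u + (s - u))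
    {θ : ℝ} (hθ : 0 ≤ θ) :
    ∫ ν in (0:ℝ)..θ, S.indicator (fun _ => (1:ℝ)) ν ≤ p θ - p 0 := by
  have hm : MonotoneOn p (uIcc 0 θ) := hp.monotoneOn _
  have h1 := hm.intervalIntegral_deriv_mem_uIcc
  rw [uIcc_of_le (by linarith [hp hθ])] at h1
  refine le_trans ?_ h1.2
  refine intervalIntegral.integral_mono_ae_restrict hθ ?_ hm.intervalIntegrable_deriv ?_
  · rw [intervalIntegrable_iff]
    exact IntegrableOn.indicator (by simp) hS
  · rw [EventuallyLE, ae_restrict_iff' measurableSet_Icc]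
    filter_upwards [hp.ae_differentiableAt] with u hu hu0
    by_cases huS : u ∈ S
    · obtain ⟨ε, hε, H⟩ := h u huS hu0.1
      have e1 : HasDerivWithinAt p (deriv p u) (Ici u) u := hu.hasDerivAt.hasDerivWithinAt
      have e2 : HasDerivWithinAt p 1 (Ici u) u := by
        have : HasDerivWithinAt (fun s => p u + (s - u)) 1 (Ici u) u :=
          (((hasDerivAt_id u).sub_const u).const_add (p u)).hasDerivWithinAt
        refine this.congr_of_eventuallyEq ?_ (by simp)
        have : ∀ᶠ s in nhdsWithin u (Ici u), s < u + ε :=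
          mem_nhdsWithin_of_mem_nhds (Iio_mem_nhds (by linarith))
        filter_upwards [this, self_mem_nhdsWithin] with s a b using H s b a
      have := (uniqueDiffWithinAt_Ici u).eq_deriv _ e1 e2
      simp [huS, this]
    · simp only [huS, not_false_eq_true, indicator_of_notMem]
      exact hp.deriv_nonneg

/-- Occupation-time bounds (equation (2.34)): with `z = z₊ ∘ p₊ − z₋ ∘ p₋`, for `θ ≥ 0`,
`∫₀^θ 1{z > 0} ≤ p₊(θ) ≤ ∫₀^θ 1{z ≥ 0}` and `∫₀^θ 1{z < 0} ≤ p₋(θ) ≤ ∫₀^θ 1{z ≤ 0}`. -/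
theorem occupation_time_bounds
    (zp zm : ℝ → ℝ)
    (hzp : ContinuousOn zp (Set.Ici 0)) (hzm : ContinuousOn zm (Set.Ici 0))
    (hzp0 : zp 0 = 0) (hzm0 : zm 0 = 0)
    (hzpinf : Filter.liminf (fun θ => (zp θ : EReal)) Filter.atTop = ⊥)
    (hzminf : Filter.liminf (fun θ => (zm θ : EReal)) Filter.atTop = ⊥)
    (pp pm : ℝ → ℝ)
    (hpp : ∀ θ ∈ Set.Ici (0:ℝ),
      IsGreatest {ν ∈ Set.Icc 0 θ | skorohod zp ν = skorohod zm (θ - ν)} (pp θ))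
    (hpm : ∀ θ ∈ Set.Ici (0:ℝ),
      IsLeast {ν ∈ Set.Icc 0 θ | skorohod zm ν = skorohod zp (θ - ν)} (pm θ)) :
    ∀ θ ∈ Set.Ici (0:ℝ),
      (∫ ν in (0:ℝ)..θ,
          Set.indicator {u : ℝ | 0 < zp (pp u) - zm (pm u)} (fun _ => (1:ℝ)) ν)
        ≤ pp θ ∧
      pp θ ≤
        ∫ ν in (0:ℝ)..θ,
          Set.indicator {u : ℝ | 0 ≤ zp (pp u) - zm (pm u)} (fun _ => (1:ℝ)) ν ∧
      (∫ ν in (0:ℝ)..θ,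
          Set.indicator {u : ℝ | zp (pp u) - zm (pm u) < 0} (fun _ => (1:ℝ)) ν)
        ≤ pm θ ∧
      pm θ ≤
        ∫ ν in (0:ℝ)..θ,
          Set.indicator {u : ℝ | zp (pp u) - zm (pm u) ≤ 0} (fun _ => (1:ℝ)) ν := by
  have Lp : ∀ {s t : ℝ}, 0 ≤ s → s ≤ t → skorohod zp s ≤ skorohod zp t := fun h0 h1 =>
    sk_mono_s5 hzp h0 h1
  have Lm : ∀ {s t : ℝ}, 0 ≤ s → s ≤ t → skorohod zm s ≤ skorohod zm t := fun h0 h1 =>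
    sk_mono_s5 hzm h0 h1
  have p0 : ∀ u, 0 ≤ u → 0 ≤ pp u := fun u hu => (hpp u hu).1.1.1
  have p1 : ∀ u, 0 ≤ u → pp u ≤ u := fun u hu => (hpp u hu).1.1.2
  have pe : ∀ u, 0 ≤ u → skorohod zp (pp u) = skorohod zm (u - pp u) := fun u hu => (hpp u hu).1.2
  have pmax : ∀ u ν, 0 ≤ u → 0 ≤ ν → ν ≤ u → skorohod zp ν = skorohod zm (u - ν) → ν ≤ pp u :=
    fun u ν hu h0 h1 h2 => (hpp u hu).2 ⟨⟨h0, h1⟩, h2⟩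
  have hpm' : ∀ u, 0 ≤ u → pm u = u - pp u := by
    intro u hu
    refine (hpm u hu).unique ⟨⟨⟨by linarith [p1 u hu], by linarith [p0 u hu]⟩, ?_⟩, ?_⟩
    · rw [sub_sub_cancel]; exact (pe u hu).symm
    · rintro ν ⟨⟨h0, h1⟩, h2⟩
      have := pmax u (u - ν) hu (by linarith) (by linarith) (by rw [sub_sub_cancel]; exact h2.symm)
      linarith
  have mono1 : ∀ u v, 0 ≤ u → u ≤ v → pp u ≤ pp v := by
    intro u v hu huv
    have hv := hu.trans huv
    by_contra! hlt
    have a1 := Lp (p0 v hv) hlt.le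
    have a2 := pe u hu
    have a3 := pe v hv
    have a4 := @Lm (u - pp u) (v - pp u) (by linarith [p1 u hu]) (by linarith)
    have a5 := @Lm (v - pp u) (v - pp v) (by linarith [p1 u hu]) (by linarith)
    have := pmax v (pp u) hv (p0 u hu) (by linarith [p1 u hu]) (by linarith)
    linarith
  have mono2 : ∀ u v, 0 ≤ u → u ≤ v → u - pp u ≤ v - pp v := by
    intro u v hu huv
    have hv := hu.trans huv
    by_contra! hlt
    have b1 := p1 v hv
    have b2 := p1 u hu
    have b3 := p0 u hu
    have a1 := @Lm (v - pp v) (u - pp u) (by linarith) hlt.le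
    have a2 := pe u hu
    have a3 := pe v hv
    have a4 := @Lp (pp u) (u - (v - pp v)) (by linarith) (by linarith)
    have a5 := @Lp (u - (v - pp v)) (pp v) (by linarith) (by linarith)
    have := pmax u (u - (v - pp v)) hu (by linarith) (by linarith)
      (by rw [sub_sub_cancel]; linarith)
    linarith
  have pp0 : pp 0 = 0 := le_antisymm (p1 0 le_rfl) (p0 0 le_rfl)
  -- extensions
  set P : ℝ → ℝ := fun u => pp (max u 0) with hP
  set M : ℝ → ℝ := fun u => max u 0 - pp (max u 0) with hM
  have Pmono : Monotone P := fun u v h => mono1 _ _ (le_max_right _ _) (max_le_max_right _ h)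
  have Mmono : Monotone M := fun u v h => mono2 _ _ (le_max_right _ _) (max_le_max_right _ h)
  have P0 : ∀ u, 0 ≤ P u := fun u => p0 _ (le_max_right _ _)
  have M0 : ∀ u, 0 ≤ M u := fun u => by
    have := p1 (max u 0) (le_max_right _ _)
    simp only [hM]; linarith
  have PM : ∀ u, P u + M u = max u 0 := fun u => by simp only [hP, hM]; ring
  have Pcont : Continuous P := by
    refine LipschitzWith.continuous (K := 1) (LipschitzWith.of_le_add_mul 1 fun u v => ?_)
    have hab := abs_le.1 (le_refl |u - v|)
    rw [Real.dist_eq, NNReal.coe_one, one_mul]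
    rcases le_total u v with h | h
    · linarith [Pmono h, abs_nonneg (u - v)]
    · have h1 := Mmono h
      have h2 := PM u
      have h3 := PM v
      have h4 : max u 0 ≤ max v 0 + |u - v| :=
        max_le (by linarith [le_max_left v 0, hab.2]) (by linarith [le_max_right v 0, abs_nonneg (u - v)])
      linarith
  have Mcont : Continuous M := (continuous_id.max continuous_const).sub Pcont
  have Gcont : Continuous (fun u => zp (P u) - zm (M u)) :=
    (hzp.comp_continuous Pcont P0).sub (hzm.comp_continuous Mcont M0)
  have hg : ∀ u, 0 ≤ u → zp (pp u) - zm (pm u) = zp (P u) - zm (M u) := by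
    intro u hu
    simp only [hP, hM, max_eq_left hu, hpm' u hu]
  have key1 : ∀ u ∈ {u | 0 < zp (P u) - zm (M u)}, 0 ≤ u →
      ∃ ε > 0, ∀ s, u ≤ s → s < u + ε → P s = P u + (s - u) := by
    intro u hu hu0
    simp only [hP, hM, max_eq_left hu0, mem_setOf_eq] at hu
    have c1 := sk_ge_s5 hzm (t := u - pp u) (by linarith [p1 u hu0]) le_rfl
    have c2 := pe u hu0
    obtain ⟨ε, hε, H⟩ := sk_flat hzp (p0 u hu0) (by linarith)
    refine ⟨ε, hε, fun s hus hs => ?_⟩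
    have hs0 := hu0.trans hus
    simp only [hP, max_eq_left hu0, max_eq_left hs0]
    have d1 := mono2 u s hu0 hus
    have d2 := H (pp u + (s - u)) (by linarith [p0 u hu0])
      (by rw [abs_lt]; constructor <;> linarith)
    have d3 := pmax s (pp u + (s - u)) hs0 (by linarith [p0 u hu0]) (by linarith [p1 u hu0])
      (by rw [d2, c2]; congr 1; ring)
    linarith
  have key2 : ∀ u ∈ {u | zp (P u) - zm (M u) < 0}, 0 ≤ u →
      ∃ ε > 0, ∀ s, u ≤ s → s < u + ε → M s = M u + (s - u) := by
    intro u hu hu0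
    simp only [hP, hM, max_eq_left hu0, mem_setOf_eq] at hu
    have b0 : 0 ≤ u - pp u := by linarith [p1 u hu0]
    have c1 := sk_ge_s5 hzp (t := pp u) (p0 u hu0) le_rfl
    have c2 := pe u hu0
    have bpos : 0 < u - pp u := by
      rcases b0.eq_or_lt with h | h
      · rw [← h, sk_zero hzm0] at c2
        rw [← h, hzm0] at hu
        linarith
      · exact h
    obtain ⟨ε, hε, H⟩ := sk_flat hzm b0 (by linarith)
    refine ⟨min ε (u - pp u), lt_min hε bpos, fun s hus hs => ?_⟩
    have hs1 : s < u + ε := by linarith [min_le_left ε (u - pp u)]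
    have hs2 : s < u + (u - pp u) := by linarith [min_le_right ε (u - pp u)]
    have hs0 := hu0.trans hus
    simp only [hM, max_eq_left hu0, max_eq_left hs0]
    have d1 := mono1 u s hu0 hus
    have d1' := mono2 u s hu0 hus
    have d2 := H (s - pp s) (by linarith) (by rw [abs_lt]; constructor <;> linarith)
    have d3 := H (u - pp s) (by linarith) (by rw [abs_lt]; constructor <;> linarith)
    have d4 := pmax u (pp s) hu0 (p0 s hs0) (by linarith) (by rw [pe s hs0, d2, d3])
    linarith
  intro θ hθ
  have hθ : 0 ≤ θ := hθ
  have mS : MeasurableSet {u | 0 < zp (P u) - zm (M u)} :=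
    (isOpen_lt continuous_const Gcont).measurableSet
  have mT : MeasurableSet {u | zp (P u) - zm (M u) < 0} :=
    (isOpen_lt Gcont continuous_const).measurableSet
  have A := occ_aux Pmono mS key1 hθ
  have B := occ_aux Mmono mT key2 hθ
  have eP : P θ - P 0 = pp θ := by simp [hP, max_eq_left hθ, pp0]
  have eM : M θ - M 0 = pm θ := by simp [hM, max_eq_left hθ, pp0, hpm' θ hθ]
  rw [eP] at A
  rw [eM] at B
  have iI : ∀ {S : Set ℝ}, MeasurableSet S →
      IntervalIntegrable (S.indicator (fun _ => (1:ℝ))) volume 0 θ := by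
    intro S hS
    rw [intervalIntegrable_iff]
    exact IntegrableOn.indicator (by simp) hS
  have compl : ∀ {S : Set ℝ}, MeasurableSet S →
      ∫ ν in (0:ℝ)..θ, (1 - S.indicator (fun _ => (1:ℝ)) ν) =
        θ - ∫ ν in (0:ℝ)..θ, S.indicator (fun _ => (1:ℝ)) ν := by
    intro S hS
    rw [intervalIntegral.integral_sub (by simp) (iI hS)]
    simp
  have E1 : ∫ ν in (0:ℝ)..θ,
      Set.indicator {u : ℝ | 0 < zp (pp u) - zm (pm u)} (fun _ => (1:ℝ)) ν =
      ∫ ν in (0:ℝ)..θ, Set.indicator {u | 0 < zp (P u) - zm (M u)} (fun _ => (1:ℝ)) ν := by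
    refine intervalIntegral.integral_congr fun u hu => ?_
    rw [uIcc_of_le hθ] at hu
    simp only [indicator_apply, mem_setOf_eq, hg u hu.1]
  have E2 : ∫ ν in (0:ℝ)..θ,
      Set.indicator {u : ℝ | zp (pp u) - zm (pm u) < 0} (fun _ => (1:ℝ)) ν =
      ∫ ν in (0:ℝ)..θ, Set.indicator {u | zp (P u) - zm (M u) < 0} (fun _ => (1:ℝ)) ν := by
    refine intervalIntegral.integral_congr fun u hu => ?_
    rw [uIcc_of_le hθ] at hu
    simp only [indicator_apply, mem_setOf_eq, hg u hu.1]
  have E3 : ∫ ν in (0:ℝ)..θ,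
      Set.indicator {u : ℝ | 0 ≤ zp (pp u) - zm (pm u)} (fun _ => (1:ℝ)) ν =
      ∫ ν in (0:ℝ)..θ,
        (1 - Set.indicator {u | zp (P u) - zm (M u) < 0} (fun _ => (1:ℝ)) ν) := by
    refine intervalIntegral.integral_congr fun u hu => ?_
    rw [uIcc_of_le hθ] at hu
    simp only [indicator_apply, mem_setOf_eq, hg u hu.1]
    rcases lt_or_ge (zp (P u) - zm (M u)) 0 with h | h
    · rw [if_neg (not_le.2 h), if_pos h]; norm_num
    · rw [if_pos h, if_neg (not_lt.2 h)]; norm_num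
  have E4 : ∫ ν in (0:ℝ)..θ,
      Set.indicator {u : ℝ | zp (pp u) - zm (pm u) ≤ 0} (fun _ => (1:ℝ)) ν =
      ∫ ν in (0:ℝ)..θ,
        (1 - Set.indicator {u | 0 < zp (P u) - zm (M u)} (fun _ => (1:ℝ)) ν) := by
    refine intervalIntegral.integral_congr fun u hu => ?_
    rw [uIcc_of_le hθ] at hu
    simp only [indicator_apply, mem_setOf_eq, hg u hu.1]
    rcases lt_or_ge 0 (zp (P u) - zm (M u)) with h | h
    · rw [if_neg (not_le.2 h), if_pos h]; norm_num
    · rw [if_pos h, if_neg (not_lt.2 h)]; norm_num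
  have hs := hpm' θ hθ
  rw [E1, E2, E3, E4, compl mS, compl mT]
  refine ⟨A, ?_, B, ?_⟩ <;> linarith
end

section
/- (Linearity of p₊ on positive excursions, equation (2.41).) Let (z₊, z₋) ∈ 𝒟, let 0 ≤ a < b ≤ ∞, and suppose (z₊ + λ₊)(p₊(a)) = 0 while (z₊ + λ₊)(p₊(s)) > 0 for all s ∈ (a, b). Then p₊(s) = p₊(a) + s − a for every s ∈ [a, b). -/
open Set Filter

theorem skorohod_spec (z : ℝ → ℝ) (hz : ContinuousOn z (Set.Ici 0)) (hz0 : z 0 = 0)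
    (θ : ℝ) (hθ : 0 ≤ θ) :
    (∃ ν, 0 ≤ ν ∧ ν ≤ θ ∧ -z ν = skorohod z θ) ∧
      ∀ ν, 0 ≤ ν → ν ≤ θ → -z ν ≤ skorohod z θ := by
  have hc : ContinuousOn (fun ν => -z ν) (Set.Icc 0 θ) :=
    (hz.mono (fun x hx => hx.1)).neg
  have hK : IsCompact ((fun ν => -z ν) '' Set.Icc 0 θ) := isCompact_Icc.image_of_continuousOn hc
  have hne : ((fun ν => -z ν) '' Set.Icc 0 θ).Nonempty := ⟨_, 0, ⟨le_refl _, hθ⟩, rfl⟩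
  have hG := hK.isGreatest_sSup hne
  have h0 : 0 ≤ sSup ((fun ν => -z ν) '' Set.Icc 0 θ) :=
    hG.2 ⟨0, ⟨le_refl _, hθ⟩, by simp [hz0]⟩
  have he : skorohod z θ = sSup ((fun ν => -z ν) '' Set.Icc 0 θ) := max_eq_right h0
  rw [he]
  refine ⟨?_, fun ν h1 h2 => hG.2 ⟨ν, ⟨h1, h2⟩, rfl⟩⟩
  obtain ⟨ν, h1, h2⟩ := hG.1
  exact ⟨ν, h1.1, h1.2, h2⟩

theorem skorohod_mono' (z : ℝ → ℝ) (hz : ContinuousOn z (Set.Ici 0)) (hz0 : z 0 = 0)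
    (s t : ℝ) (hs : 0 ≤ s) (hst : s ≤ t) : skorohod z s ≤ skorohod z t := by
  obtain ⟨ν, h1, h2, h3⟩ := (skorohod_spec z hz hz0 s hs).1
  rw [← h3]
  exact (skorohod_spec z hz hz0 t (hs.trans hst)).2 ν h1 (h2.trans hst)

/-- Linearity of `p₊` on positive excursions (equation (2.41)): if
`(z₊ + λ₊)(p₊(a)) = 0` and `(z₊ + λ₊)(p₊(s)) > 0` for all `s ∈ (a, b)`
(where `0 ≤ a < b ≤ ∞`, with `b` an extended real), then
`p₊(s) = p₊(a) + s − a` for all `s ∈ [a, b)`. -/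
theorem pplus_linear_on_excursions
    (zp zm : ℝ → ℝ)
    (hzp : ContinuousOn zp (Set.Ici 0)) (hzm : ContinuousOn zm (Set.Ici 0))
    (hzp0 : zp 0 = 0) (hzm0 : zm 0 = 0)
    (hzpinf : Filter.liminf (fun θ => (zp θ : EReal)) Filter.atTop = ⊥)
    (hzminf : Filter.liminf (fun θ => (zm θ : EReal)) Filter.atTop = ⊥)
    (pp pm : ℝ → ℝ)
    (hpp : ∀ θ ∈ Set.Ici (0:ℝ),
      IsGreatest {ν ∈ Set.Icc 0 θ | skorohod zp ν = skorohod zm (θ - ν)} (pp θ))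
    (hpm : ∀ θ ∈ Set.Ici (0:ℝ),
      IsLeast {ν ∈ Set.Icc 0 θ | skorohod zm ν = skorohod zp (θ - ν)} (pm θ))
    (a : ℝ) (b : EReal) (ha : 0 ≤ a) (hab : (a : EReal) < b)
    (hstart : zp (pp a) + skorohod zp (pp a) = 0)
    (hpos : ∀ s : ℝ, a < s → (s : EReal) < b →
      0 < zp (pp s) + skorohod zp (pp s)) :
    ∀ s : ℝ, a ≤ s → (s : EReal) < b → pp s = pp a + s - a := by
  intro s has hsb
  rcases has.eq_or_lt with rfl | has'
  · ring
  have Lm := skorohod_mono' zp hzp hzp0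
  have Mm := skorohod_mono' zm hzm hzm0
  have p0 : ∀ t, 0 ≤ t → 0 ≤ pp t := fun t ht => (hpp t ht).1.1.1
  have pt : ∀ t, 0 ≤ t → pp t ≤ t := fun t ht => (hpp t ht).1.1.2
  have pe : ∀ t, 0 ≤ t → skorohod zp (pp t) = skorohod zm (t - pp t) :=
    fun t ht => (hpp t ht).1.2
  have pmx : ∀ t ν, 0 ≤ t → pp t < ν → ν ≤ t → skorohod zm (t - ν) < skorohod zp ν := by
    intro t ν ht h1 h2
    have h3 := p0 t ht
    have hne : skorohod zp ν ≠ skorohod zm (t - ν) := fun h =>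
      absurd ((hpp t ht).2 ⟨⟨by linarith, h2⟩, h⟩) (not_le.2 h1)
    have e1 := Lm (pp t) ν h3 h1.le
    have e2 := Mm (t - ν) (t - pp t) (by linarith) (by linarith)
    have e3 := pe t ht
    exact lt_of_le_of_ne (by linarith) (Ne.symm hne)
  have pmono : ∀ u t, 0 ≤ u → u ≤ t → pp u ≤ pp t := by
    intro u t hu hut
    by_contra! h
    have e0 := pt u hu
    have e1 := pmx t (pp u) (by linarith) h (by linarith)
    have e2 := Mm (u - pp u) (t - pp u) (by linarith) (by linarith)
    have e3 := pe u hu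
    linarith
  have plip : ∀ u t, 0 ≤ u → u ≤ t → pp t ≤ pp u + (t - u) := by
    intro u t hu hut
    by_contra! h
    have e0 := pt t (by linarith)
    have e5 := p0 u hu
    have e1 := pmx u (pp t - (t - u)) hu (by linarith) (by linarith)
    have e2 := Lm (pp t - (t - u)) (pp t) (by linarith) (by linarith)
    have e3 := pe t (by linarith)
    have e4 : u - (pp t - (t - u)) = t - pp t := by ring
    rw [e4] at e1
    linarith
  have hs0 : 0 ≤ s := by linarith
  have pc : ContinuousOn pp (Set.Icc a s) := by
    have : LipschitzOnWith 1 pp (Set.Icc a s) := by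
      apply LipschitzOnWith.of_le_add
      intro x hx y hy
      rw [Real.dist_eq]
      rcases le_total x y with h | h
      · have := pmono x y (ha.trans hx.1) h
        have := abs_nonneg (x - y)
        linarith
      · have := plip y x (ha.trans hy.1) h
        have := le_abs_self (x - y)
        linarith
    exact this.continuousOn
  have hconst : skorohod zp (pp s) = skorohod zp (pp a) := by
    refine le_antisymm ?_ (Lm _ _ (p0 a ha) (pmono a s ha has))
    by_contra! h
    obtain ⟨ν, h1, h2, h3⟩ := (skorohod_spec zp hzp hzp0 (pp s) (p0 s hs0)).1
    have h4 : pp a < ν := by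
      by_contra! h4
      have := (skorohod_spec zp hzp hzp0 (pp a) (p0 a ha)).2 ν h1 h4
      linarith
    obtain ⟨t, ht, rfl⟩ := intermediate_value_Icc has pc ⟨h4.le, h2⟩
    have hat : a < t := lt_of_le_of_ne ht.1 (by rintro rfl; exact lt_irrefl _ h4)
    have h5 := hpos t hat (lt_of_le_of_lt (EReal.coe_le_coe_iff.2 ht.2) hsb)
    have h6 := Lm (pp t) (pp s) h1 h2
    linarith
  have hle := plip a s ha has
  refine le_antisymm (by linarith) ?_
  by_contra! h
  have hps := hpos s has' hsb
  have p0s := p0 s hs0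
  have hev : ∀ᶠ x in nhdsWithin (pp s) (Set.Ici 0), -skorohod zp (pp s) < zp x :=
    (hzp (pp s) p0s).eventually (lt_mem_nhds (by linarith))
  obtain ⟨ε, hε, hb⟩ := Metric.mem_nhdsWithin_iff.1 hev
  set δ := min (ε / 2) (pp a + s - a - pp s) with hδ
  have d1 : δ ≤ ε / 2 := min_le_left _ _
  have d2 : δ ≤ pp a + s - a - pp s := min_le_right _ _
  have d0 : 0 < δ := lt_min (by linarith) (by linarith)
  have hpa := pt a ha
  have f1 := pmx s (pp s + δ) hs0 (by linarith) (by linarith)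
  have f2 := Mm (a - pp a) (s - (pp s + δ)) (by linarith) (by linarith)
  have f3 := pe a ha
  obtain ⟨ν, h1, h2, h3⟩ := (skorohod_spec zp hzp hzp0 (pp s + δ) (by linarith)).1
  rcases le_total ν (pp s) with h4 | h4
  · have := (skorohod_spec zp hzp hzp0 (pp s) p0s).2 ν h1 h4
    linarith
  · have : -skorohod zp (pp s) < zp ν := hb ⟨by
      rw [Metric.mem_ball, Real.dist_eq, abs_of_nonneg (by linarith)]; linarith, h1⟩
    linarith
end

section
/- (Appendix C, equation (7.62).) For every α ∈ ℝ, the complex-valued integral ∫₀^∞ (1 − e^{iαℓ}) (2πℓ³)^{−1/2} dℓ converges (the integrand is Lebesgue integrable on (0,∞)) and equals √|α| (1 − sign(α) i), where sign(α) equals 1 for α > 0, −1 for α < 0, and 0 for α = 0. -/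
open MeasureTheory Set Real

lemma lmi_norm_le (w : ℂ) (hw : 0 ≤ w.re) : ‖1 - Complex.exp (-w)‖ ≤ ‖w‖ := by
  have h := Convex.norm_image_sub_le_of_norm_hasDerivWithin_le (𝕜 := ℂ)
    (f := fun w : ℂ => Complex.exp (-w)) (f' := fun w : ℂ => -Complex.exp (-w))
    (s := {w : ℂ | 0 ≤ w.re}) (C := 1) (x := w) (y := 0) ?_ ?_ ?_ hw ?_
  · simpa using h
  · intro x _
    have : HasDerivAt (fun w : ℂ => Complex.exp (-w)) (Complex.exp (-x) * (-1)) x :=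
      (hasDerivAt_neg x).cexp
    simpa using this.hasDerivWithinAt
  · intro x hx
    simp only [norm_neg, Complex.norm_exp, Complex.neg_re]
    simpa using hx
  · exact convex_halfSpace_re_ge 0
  · simp

lemma lmi_norm_le_two (w : ℂ) (hw : 0 ≤ w.re) : ‖1 - Complex.exp (-w)‖ ≤ 2 := by
  refine (norm_sub_le _ _).trans ?_
  have : ‖Complex.exp (-w)‖ ≤ 1 := by
    simp only [Complex.norm_exp, Complex.neg_re]
    simpa using hw
  simp only [norm_one]
  linarith

/-- dominating function -/
noncomputable def lmiBound (C : ℝ) (t : ℝ) : ℝ :=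
  if t ≤ 1 then C * t ^ (-(1/2) : ℝ) else 2 * t ^ (-(3/2) : ℝ)

lemma lmiBound_integrable (C : ℝ) : IntegrableOn (lmiBound C) (Ioi 0) := by
  rw [← Ioc_union_Ioi_eq_Ioi (zero_le_one' ℝ)]
  refine IntegrableOn.union ?_ ?_
  · have h : IntegrableOn (fun t : ℝ => C * t ^ (-(1/2) : ℝ)) (Ioc 0 1) := by
      have := (intervalIntegral.intervalIntegrable_rpow' (a := 0) (b := 1)
        (r := (-(1/2) : ℝ)) (by norm_num)).const_mul C
      rwa [intervalIntegrable_iff_integrableOn_Ioc_of_le zero_le_one] at this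
    refine h.congr_fun (fun t ht => ?_) measurableSet_Ioc
    simp [lmiBound, ht.2]
  · have h : IntegrableOn (fun t : ℝ => 2 * t ^ (-(3/2) : ℝ)) (Ioi 1) :=
      (integrableOn_Ioi_rpow_of_lt (by norm_num) one_pos).const_mul 2
    refine h.congr_fun (fun t ht => ?_) measurableSet_Ioi
    simp [lmiBound, not_le.mpr (show (1:ℝ) < t from ht)]

lemma lmi_bound (C : ℝ) (z : ℂ) (hz : 0 ≤ z.re) (hC : ‖z‖ ≤ C) (t : ℝ) (ht : 0 < t) :
    ‖(1 - Complex.exp (-(z * t))) * ((t ^ (-(3/2) : ℝ) : ℝ) : ℂ)‖ ≤ lmiBound C t := by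
  have hre : 0 ≤ (z * t).re := by simpa using mul_nonneg hz ht.le
  have hp : 0 < t ^ (-(3/2) : ℝ) := rpow_pos_of_pos ht _
  rw [norm_mul, Complex.norm_real, Real.norm_of_nonneg hp.le]
  unfold lmiBound
  split_ifs
  · have h1 := lmi_norm_le _ hre
    have h2 : t ^ (-(1/2) : ℝ) = t * t ^ (-(3/2) : ℝ) := by
      nth_rewrite 2 [← rpow_one t]
      rw [← rpow_add ht]; norm_num
    rw [norm_mul, Complex.norm_real, Real.norm_of_nonneg ht.le] at h1
    rw [h2, ← mul_assoc]
    gcongr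
    exact h1.trans (by gcongr)
  · gcongr
    exact lmi_norm_le_two _ hre

lemma lmi_meas (z : ℂ) : Measurable
    (fun t : ℝ => (1 - Complex.exp (-(z * t))) * ((t ^ (-(3/2) : ℝ) : ℝ) : ℂ)) := by
  fun_prop

lemma lmi_integrable (z : ℂ) (hz : 0 ≤ z.re) : IntegrableOn
    (fun t : ℝ => (1 - Complex.exp (-(z * t))) * ((t ^ (-(3/2) : ℝ) : ℝ) : ℂ)) (Ioi 0) := by
  refine Integrable.mono' (lmiBound_integrable ‖z‖) (lmi_meas z).aestronglyMeasurable ?_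
  filter_upwards [ae_restrict_mem measurableSet_Ioi] with t ht
  exact lmi_bound _ z hz le_rfl t ht

lemma lmi_gamma (z : ℂ) (hz : 0 < z.re) : IntegrableOn
    (fun t : ℝ => ((t ^ (-(1/2) : ℝ) : ℝ) : ℂ) * Complex.exp (-(z * t))) (Ioi 0) := by
  have h := integrableOn_rpow_mul_exp_neg_mul_rpow (p := 1) (s := -(1/2)) (b := z.re)
    (by norm_num) (by norm_num) hz
  refine Integrable.mono' h (by fun_prop) ?_
  filter_upwards [ae_restrict_mem measurableSet_Ioi] with t ht
  have hp : 0 < t ^ (-(1/2) : ℝ) := rpow_pos_of_pos ht _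
  rw [norm_mul, Complex.norm_real, Real.norm_of_nonneg hp.le, Complex.norm_exp]
  simp

lemma lmi_gamma_integral (z : ℂ) (hz : 0 < z.re) :
    ∫ t in Ioi (0:ℝ), ((t ^ (-(1/2) : ℝ) : ℝ) : ℂ) * Complex.exp (-(z * t)) =
      (1 / z) ^ (1/2 : ℂ) * (√π : ℝ) := by
  have h1 := integral_gaussian_complex_Ioi hz
  have h2 := integral_comp_rpow_Ioi (fun y : ℝ => Complex.exp (-z * (y : ℂ) ^ 2))
    (p := 1/2) (by norm_num)
  rw [h1] at h2
  have h3 : ∫ x in Ioi (0:ℝ), (|(1/2 : ℝ)| * x ^ ((1/2 : ℝ) - 1)) •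
      Complex.exp (-z * ((x ^ (1/2 : ℝ) : ℝ) : ℂ) ^ 2) =
      ∫ t in Ioi (0:ℝ), (1/2 : ℂ) *
        (((t ^ (-(1/2) : ℝ) : ℝ) : ℂ) * Complex.exp (-(z * t))) := by
    refine setIntegral_congr_fun measurableSet_Ioi (fun t ht => ?_)
    have ht' : (0:ℝ) ≤ t := le_of_lt ht
    have e1 : ((t ^ (1/2 : ℝ) : ℝ) : ℂ) ^ 2 = t := by
      rw [← Complex.ofReal_pow, ← Real.sqrt_eq_rpow, Real.sq_sqrt ht']
    have e2 : ((1/2 : ℝ) - 1) = -(1/2) := by norm_num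
    have e3 : |(1/2 : ℝ)| = 1/2 := abs_of_pos (by norm_num)
    simp only [e1, e2, e3, Complex.real_smul]
    rw [neg_mul]
    push_cast
    ring
  rw [h3, integral_const_mul] at h2
  have h4 : ((π : ℂ) / z) ^ (1/2 : ℂ) = (1 / z) ^ (1/2 : ℂ) * (√π : ℝ) := by
    have hz0 : z ≠ 0 := by rintro rfl; simp at hz
    have hz1 : 1 / z ≠ 0 := one_div_ne_zero hz0
    have hpi : (π : ℂ) ≠ 0 := Complex.ofReal_ne_zero.mpr pi_ne_zero
    have hsp : ((√π : ℝ) : ℂ) = (π : ℂ) ^ (1/2 : ℂ) := by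
      rw [Real.sqrt_eq_rpow, Complex.ofReal_cpow pi_pos.le]; norm_num
    rw [div_eq_mul_one_div, hsp, Complex.cpow_def_of_ne_zero (mul_ne_zero hpi hz1),
      Complex.cpow_def_of_ne_zero hz1, Complex.cpow_def_of_ne_zero hpi,
      Complex.log_ofReal_mul pi_pos hz1, ← Complex.exp_add, Complex.ofReal_log pi_pos.le]
    congr 1; ring
  rw [← h4]
  linear_combination 2 * h2

lemma lmi_value (z : ℂ) (hz : 0 < z.re) :
    ∫ t in Ioi (0:ℝ), (1 - Complex.exp (-(z * t))) * ((t ^ (-(3/2) : ℝ) : ℝ) : ℂ) =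
      2 * z ^ (1/2 : ℂ) * (√π : ℝ) := by
  set G : ℝ → ℂ := fun t => (1 - Complex.exp (-(z * t))) * ((-2 * t ^ (-(1/2) : ℝ) : ℝ) : ℂ)
  have hI1 := lmi_integrable z hz.le
  have hI2 := (lmi_gamma z hz).const_mul (2 * z)
  have hnorm : ∀ t : ℝ, 0 ≤ t → ‖G t‖ = ‖1 - Complex.exp (-(z * t))‖ * (2 * t ^ (-(1/2) : ℝ)) := by
    intro t ht
    have hp : 0 ≤ t ^ (-(1/2) : ℝ) := rpow_nonneg ht _
    simp only [G]
    rw [norm_mul, Complex.norm_real, norm_mul, Real.norm_of_nonneg hp]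
    norm_num
  have hre : ∀ t : ℝ, 0 ≤ t → 0 ≤ (z * t).re := fun t ht => by
    simpa using mul_nonneg hz.le ht
  have hder : ∀ t ∈ Ioi (0:ℝ), HasDerivAt G
      ((1 - Complex.exp (-(z * t))) * ((t ^ (-(3/2) : ℝ) : ℝ) : ℂ)
        - (2 * z) * (((t ^ (-(1/2) : ℝ) : ℝ) : ℂ) * Complex.exp (-(z * t)))) t := by
    intro t ht
    have h1 : HasDerivAt (fun t : ℝ => -(z * (t : ℂ))) (-(z * 1)) t :=
      ((Complex.ofRealCLM.hasDerivAt (x := t)).const_mul z).neg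
    have h2 := (h1.cexp).const_sub 1
    have h3 := (((Real.hasDerivAt_rpow_const (x := t) (p := (-(1/2) : ℝ))
      (Or.inl (ne_of_gt ht))).const_mul (-2)).ofReal_comp)
    refine (h2.mul h3).congr_deriv ?_
    have : (-(1/2) - 1 : ℝ) = -(3/2) := by norm_num
    rw [this]
    push_cast
    ring
  have hcont : ContinuousWithinAt G (Ici 0) 0 := by
    have h0 : G 0 = 0 := by simp [G]
    unfold ContinuousWithinAt
    rw [h0]
    have hlim : Filter.Tendsto (fun t : ℝ => 2 * ‖z‖ * t ^ (1/2 : ℝ)) (nhdsWithin 0 (Ici 0))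
        (nhds 0) := by
      have : Continuous (fun t : ℝ => 2 * ‖z‖ * t ^ (1/2 : ℝ)) :=
        continuous_const.mul (Real.continuous_rpow_const (by norm_num))
      have := (this.tendsto 0).mono_left (nhdsWithin_le_nhds (s := Ici 0))
      simpa using this
    refine squeeze_zero_norm' ?_ hlim
    filter_upwards [self_mem_nhdsWithin] with t ht
    rcases eq_or_lt_of_le (show (0:ℝ) ≤ t from ht) with h | h
    · rw [← h, h0]; simp
    rw [hnorm t ht]
    have h1 := lmi_norm_le _ (hre t ht)
    rw [norm_mul, Complex.norm_real, Real.norm_of_nonneg ht] at h1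
    have h2 : t ^ (1/2 : ℝ) = t * t ^ (-(1/2) : ℝ) := by
      nth_rewrite 2 [← rpow_one t]
      rw [← rpow_add h]; norm_num
    have hp : 0 ≤ t ^ (-(1/2) : ℝ) := rpow_nonneg ht _
    rw [h2]
    nlinarith [mul_le_mul_of_nonneg_right h1 hp]
  have htop : Filter.Tendsto G Filter.atTop (nhds 0) := by
    have hlim : Filter.Tendsto (fun t : ℝ => 4 * t ^ (-(1/2) : ℝ)) Filter.atTop (nhds 0) := by
      simpa using (tendsto_rpow_neg_atTop (y := 1/2) (by norm_num)).const_mul 4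
    refine squeeze_zero_norm' ?_ hlim
    filter_upwards [Filter.eventually_ge_atTop 0] with t ht
    rw [hnorm t ht]
    have h1 := lmi_norm_le_two _ (hre t ht)
    have hp : 0 ≤ t ^ (-(1/2) : ℝ) := rpow_nonneg ht _
    nlinarith [mul_le_mul_of_nonneg_right h1 hp]
  have key := integral_Ioi_of_hasDerivAt_of_tendsto hcont hder (hI1.sub hI2) htop
  rw [integral_sub hI1 hI2, integral_const_mul, lmi_gamma_integral z hz] at key
  have h0 : G 0 = 0 := by simp [G]
  rw [h0, sub_zero, sub_eq_zero] at key
  rw [key]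
  have hz0 : z ≠ 0 := by rintro rfl; simp at hz
  have harg : z.arg ≠ π := by
    intro h
    rw [Complex.arg_eq_pi_iff] at h
    linarith [h.1]
  rw [one_div z, Complex.inv_cpow _ _ harg]
  have : z = z ^ (1/2 : ℂ) * z ^ (1/2 : ℂ) := by
    rw [← Complex.cpow_add _ _ hz0]; norm_num
  have hne : z ^ (1/2 : ℂ) ≠ 0 := by simp [Complex.cpow_eq_zero_iff, hz0]
  nth_rewrite 1 [this]
  field_simp

lemma lmi_limit (α : ℝ) (hα : α ≠ 0) :
    ∫ t in Ioi (0:ℝ), (1 - Complex.exp (-((-(Complex.I * α)) * t))) *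
      ((t ^ (-(3/2) : ℝ) : ℝ) : ℂ) =
      2 * (-(Complex.I * α)) ^ (1/2 : ℂ) * (√π : ℝ) := by
  set w : ℂ := -(Complex.I * α)
  have hw : w.re = 0 := by simp [w]
  have hl : Filter.Tendsto (fun ε : ℝ => (ε : ℂ) + w) (nhdsWithin 0 (Ioi 0)) (nhds w) := by
    have : Continuous (fun ε : ℝ => (ε : ℂ) + w) := by fun_prop
    simpa using (this.tendsto 0).mono_left (nhdsWithin_le_nhds (s := Ioi 0))
  have hA : Filter.Tendsto (fun ε : ℝ => ∫ t in Ioi (0:ℝ),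
      (1 - Complex.exp (-(((ε : ℂ) + w) * t))) * ((t ^ (-(3/2) : ℝ) : ℝ) : ℂ))
      (nhdsWithin 0 (Ioi 0)) (nhds (∫ t in Ioi (0:ℝ),
      (1 - Complex.exp (-(w * t))) * ((t ^ (-(3/2) : ℝ) : ℝ) : ℂ))) := by
    refine tendsto_integral_filter_of_dominated_convergence (lmiBound (1 + ‖w‖)) ?_ ?_
      (lmiBound_integrable _) ?_
    · exact Filter.Eventually.of_forall fun ε => (lmi_meas _).aestronglyMeasurable
    · filter_upwards [Ioo_mem_nhdsGT (zero_lt_one' ℝ)] with ε hε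
      filter_upwards [ae_restrict_mem measurableSet_Ioi] with t ht
      refine lmi_bound _ _ (by simp [hw, hε.1.le]) ?_ t ht
      refine (norm_add_le _ _).trans ?_
      rw [Complex.norm_real, Real.norm_of_nonneg hε.1.le]
      linarith [hε.2]
    · refine Filter.Eventually.of_forall fun t => ?_
      have : Continuous (fun z : ℂ => (1 - Complex.exp (-(z * t))) *
        ((t ^ (-(3/2) : ℝ) : ℝ) : ℂ)) := by fun_prop
      exact (this.tendsto w).comp hl
  have hs : w ∈ Complex.slitPlane := by
    right; simpa [w] using hα
  have hB : Filter.Tendsto (fun ε : ℝ => 2 * ((ε : ℂ) + w) ^ (1/2 : ℂ) * ((√π : ℝ) : ℂ))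
      (nhdsWithin 0 (Ioi 0)) (nhds (2 * w ^ (1/2 : ℂ) * ((√π : ℝ) : ℂ))) := by
    have := (continuousAt_cpow_const (b := (1/2 : ℂ)) hs).tendsto.comp hl
    exact (this.const_mul 2).mul_const _
  refine tendsto_nhds_unique hA (hB.congr' ?_)
  filter_upwards [self_mem_nhdsWithin] with ε hε
  exact (lmi_value _ (by simpa [hw] using hε)).symm

lemma lmi_sqrt (α : ℝ) (hα : α ≠ 0) :
    (√2 : ℝ) * (-(Complex.I * α)) ^ (1/2 : ℂ) =
      ((Real.sqrt |α| : ℝ) : ℂ) * (1 - ((Real.sign α : ℝ) : ℂ) * Complex.I) := by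
  have h2 : ((√2 : ℝ) : ℂ) * ((√2 : ℝ) : ℂ) = 2 := by
    rw [← Complex.ofReal_mul, Real.mul_self_sqrt (by norm_num)]; norm_num
  have hn : ((√2 : ℝ) : ℂ) ≠ 0 := by simp
  have ha : ((√|α| : ℝ) : ℂ) * ((√|α| : ℝ) : ℂ) = (|α| : ℝ) := by
    rw [← Complex.ofReal_mul, Real.mul_self_sqrt (abs_nonneg _)]
  set s : ℂ := ((Real.sqrt |α| : ℝ) : ℂ) * (1 - ((Real.sign α : ℝ) : ℂ) * Complex.I) /
    ((√2 : ℝ) : ℂ) with hsdef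
  have hsq : s ^ 2 = -(Complex.I * α) := by
    have hsign : ((Real.sign α : ℝ) : ℂ) ^ 2 = 1 ∧
        ((|α| : ℝ) : ℂ) * ((Real.sign α : ℝ) : ℂ) = α := by
      rcases lt_or_gt_of_ne hα with h | h
      · simp [Real.sign_of_neg h, abs_of_neg h]
      · simp [Real.sign_of_pos h, abs_of_pos h]
    rw [hsdef, div_pow, div_eq_iff (pow_ne_zero 2 hn), mul_pow, sq (((√2 : ℝ) : ℂ)), h2,
      sq (((√|α| : ℝ) : ℂ)), ha, ← hsign.2]
    linear_combination (((|α| : ℝ) : ℂ)) * ((((Real.sign α : ℝ) : ℂ))^2 * Complex.I_sq - hsign.1)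
  have hre : 0 < s.re := by
    rw [hsdef, Complex.div_ofReal_re, Complex.re_ofReal_mul]
    have : 0 < √|α| := Real.sqrt_pos.mpr (abs_pos.mpr hα)
    simp
    positivity
  have hs : (s ^ 2) ^ (1/2 : ℂ) = s := by
    have habs : |s.arg| < π / 2 := Complex.abs_arg_lt_pi_div_two_iff.mpr (Or.inl hre)
    have := Complex.pow_cpow_nat_inv (x := s) (n := 2) (by norm_num)
      (by have := (abs_lt.mp habs).1; push_cast; linarith)
      (by have := (abs_lt.mp habs).2; push_cast; linarith)
    simpa using this
  rw [← hsq, hs, hsdef]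
  field_simp

lemma lmi_fun (α : ℝ) (t : ℝ) (ht : 0 < t) :
    (1 - Complex.exp (Complex.I * (α : ℂ) * (t : ℂ))) *
        ((Real.sqrt (2 * Real.pi * t ^ 3) : ℝ) : ℂ)⁻¹ =
    (((√2 * √π)⁻¹ : ℝ) : ℂ) * ((1 - Complex.exp (-((-(Complex.I * α)) * t))) *
      ((t ^ (-(3/2) : ℝ) : ℝ) : ℂ)) := by
  have h : (√(2 * π * t ^ 3))⁻¹ = (√2 * √π)⁻¹ * t ^ (-(3/2) : ℝ) := by
    rw [Real.sqrt_mul (by positivity), Real.sqrt_mul (by norm_num), mul_inv, rpow_neg ht.le]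
    congr 2
    rw [Real.sqrt_eq_rpow, ← Real.rpow_natCast, ← Real.rpow_mul ht.le]
    norm_num
  rw [← Complex.ofReal_inv, h, Complex.ofReal_mul, neg_mul, neg_neg]
  ring

/-- Appendix C, equation (7.62): for every `α ∈ ℝ`, the function
`ℓ ↦ (1 − e^{iαℓ})(2πℓ³)^{−1/2}` is Lebesgue integrable on `(0,∞)` and
`∫₀^∞ (1 − e^{iαℓ})(2πℓ³)^{−1/2} dℓ = √|α| (1 − sign(α)·i)`. -/
theorem levy_measure_integral (α : ℝ) :
    MeasureTheory.IntegrableOn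
      (fun ℓ : ℝ => (1 - Complex.exp (Complex.I * (α : ℂ) * (ℓ : ℂ))) *
        ((Real.sqrt (2 * Real.pi * ℓ ^ 3) : ℝ) : ℂ)⁻¹)
      (Set.Ioi 0) MeasureTheory.volume ∧
    (∫ ℓ in Set.Ioi (0:ℝ),
        (1 - Complex.exp (Complex.I * (α : ℂ) * (ℓ : ℂ))) *
          ((Real.sqrt (2 * Real.pi * ℓ ^ 3) : ℝ) : ℂ)⁻¹) =
      ((Real.sqrt |α| : ℝ) : ℂ) * (1 - ((Real.sign α : ℝ) : ℂ) * Complex.I) := by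
  constructor
  · have h : IntegrableOn _ _ _ := (lmi_integrable (-(Complex.I * α)) (by simp)).const_mul
      (((√2 * √π)⁻¹ : ℝ) : ℂ)
    exact h.congr_fun (fun t ht => (lmi_fun α t ht).symm) measurableSet_Ioi
  · by_cases hα : α = 0
    · subst hα; simp
    rw [setIntegral_congr_fun measurableSet_Ioi (fun t ht => lmi_fun α t ht),
      integral_const_mul, lmi_limit α hα, ← lmi_sqrt α hα]
    have h2 : ((√2 : ℝ) : ℂ) * ((√2 : ℝ) : ℂ) = 2 := by
      rw [← Complex.ofReal_mul, Real.mul_self_sqrt (by norm_num)]; norm_num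
    have hn : ((√2 : ℝ) : ℂ) ≠ 0 := by simp
    have hp : ((√π : ℝ) : ℂ) ≠ 0 := by
      rw [Complex.ofReal_ne_zero]; exact (Real.sqrt_pos.mpr pi_pos).ne'
    rw [← h2, Complex.ofReal_inv, Complex.ofReal_mul]
    field_simp
end
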